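/- Let μ be a Borel probability measure on SL₂(ℝ) with a finite exponential moment whose support generates a Zariski dense subgroup. There exists a constant C > 0 such that for all real numbers s, t, Σ_{n≥0} μ^{*n}{ g : κ(g) − t ∈ [0, s] } ≤ C · max{1, s²}. -/

import Mathlib

open MeasureTheory Filter

noncomputable section

abbrev SL2 := Matrix.SpecialLinearGroup (Fin 2) ℝ

abbrev PX := Projectivization ℝ (Fin 2 → ℝ)

instance : TopologicalSpace SL2 := instTopologicalSpaceSubtype
instance : TopologicalSpace PX := instTopologicalSpaceQuotient
instance : MeasurableSpace SL2 := borel _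
instance : MeasurableSpace PX := borel _

/-- Euclidean norm on ℝ². -/
def enorm2 (v : Fin 2 → ℝ) : ℝ := Real.sqrt (v 0 ^ 2 + v 1 ^ 2)

/-- Operator norm of g ∈ SL₂(ℝ) w.r.t. the Euclidean norm on ℝ². -/
def opNorm (g : SL2) : ℝ :=
  ‖Matrix.toEuclideanCLM (𝕜 := ℝ) (n := Fin 2) (g : Matrix (Fin 2) (Fin 2) ℝ)‖

/-- Cartan projection κ(g) = log ‖g‖. -/
def kappa (g : SL2) : ℝ := Real.log (opNorm g)

/-- The projective action of SL₂(ℝ) on ℙ(ℝ²). -/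
def act (g : SL2) (x : PX) : PX :=
  Projectivization.map ((Matrix.SpecialLinearGroup.toLin' g).toLinearMap)
    (LinearEquiv.injective _) x

/-- The norm cocycle σ(g, ℝv) = log (‖gv‖/‖v‖). -/
def cocycle (g : SL2) (x : PX) : ℝ :=
  Real.log (enorm2 ((g : Matrix (Fin 2) (Fin 2) ℝ).mulVec x.rep) / enorm2 x.rep)

/-- The sine distance d(ℝv, ℝw) = |det(v,w)|/(‖v‖‖w‖) on ℙ(ℝ²). -/
def projDist (x y : PX) : ℝ :=
  |x.rep 0 * y.rep 1 - x.rep 1 * y.rep 0| / (enorm2 x.rep * enorm2 y.rep)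

/-- An angle θ(x) ∈ ℝ representing x = ℝ(cos θ, sin θ). -/
def pangle (x : PX) : ℝ := Complex.arg (x.rep 0 + x.rep 1 * Complex.I)

/-- The (topological) support of a measure. -/
def measSupp (μ : Measure SL2) : Set SL2 :=
  {g | ∀ U : Set SL2, IsOpen U → g ∈ U → 0 < μ U}

/-- μ has a finite exponential moment. -/
def HasExpMoment (μ : Measure SL2) : Prop :=
  ∃ ε₁ > (0 : ℝ), ∫⁻ g, ENNReal.ofReal (opNorm g ^ ε₁) ∂μ < ⊤

/-- The group generated by the support of μ is Zariski dense in SL₂(ℝ),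
equivalently it is not solvable. -/
def ZariskiDense (μ : Measure SL2) : Prop :=
  ¬ IsSolvable (Subgroup.closure (measSupp μ))

/-- ν is μ-stationary: μ ∗ ν = ν. -/
def IsStationaryMeasure (μ : Measure SL2) (ν : Measure PX) : Prop :=
  μ.bind (fun g => ν.map (act g)) = ν

/-- The product g₁ ⋯ gₙ of a word (g₁, …, gₙ). -/
def word {n : ℕ} (g : Fin n → SL2) : SL2 := (List.ofFn g).prod

/-- The product measure μ^{⊗n} on words of length n. -/
def μpi (μ : Measure SL2) (n : ℕ) : Measure (Fin n → SL2) := Measure.pi fun _ => μ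

/-!
The norm cocycle `σ` over the projective line is at most `κ`, and `κ(γ) = σ(γ, x)` for a suitable
direction `x`. So if `γ` and `hγ` both lie in the window `κ - t ∈ [0, 1]`, then
`σ(h, γ • x) ≤ κ(hγ) - κ(γ) ≤ 1`, and a first-entrance argument bounds the expected number of visits
to the window by `sup_x ∑ₙ μ^{*n}{h | σ(h, x) ≤ 1}`. This supremum is finite as soon as the cocycle
has positive drift, uniformly in `x`, over some number of steps: then `sup_x ∫ exp(-δ σ(h, x))`
decays exponentially in the number of steps for small `δ`. Covering `[0, s]` by unit windows gives
a bound linear in `s`.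

For the positivity of the drift, note that the support of `μ` cannot map a nonempty set `M` into
itself if `M` consists of at most two lines, or is a compact set of matrices: the generated group
would preserve `M`, respectively be relatively compact, and so be solvable. By maximum principles
such an `M` exists unless the walk eventually spends less than two fifths of its time at each line
and `∫ κ dμ^{*n}` is unbounded. In the remaining case, `σ(g, ·)` is within a constant of its maximum
`κ(g)` along more than half of the walk, so averaging `σ(gh, x)` over `h` gains a multiple of
`κ(g)`, up to a constant, and the mean of this gain is as large as desired.
-/

/-! ### Convolution powers -/

section ConvolutionPowers

open scoped ENNReal

variable {G : Type*} [Monoid G] [MeasurableSpace G]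

/-- The `n`-th convolution power `μ^{*n}`: the law of the `n`-th step of the random walk with
increments of law `μ`, started at the identity. -/
def convPow (μ : Measure G) : ℕ → Measure G
  | 0 => Measure.dirac 1
  | n + 1 => convPow μ n ∗ₘ μ

lemma convPow_zero (μ : Measure G) : convPow μ 0 = Measure.dirac 1 := rfl

lemma convPow_succ (μ : Measure G) (n : ℕ) : convPow μ (n + 1) = convPow μ n ∗ₘ μ := rfl

variable [MeasurableMul₂ G] (μ : Measure G) [IsProbabilityMeasure μ]

instance (n : ℕ) : IsProbabilityMeasure (convPow μ n) := by
  induction n with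
  | zero => exact inferInstanceAs (IsProbabilityMeasure (Measure.dirac 1))
  | succ n ih => exact inferInstanceAs (IsProbabilityMeasure (convPow μ n ∗ₘ μ))

lemma convPow_one : convPow μ 1 = μ := Measure.dirac_one_mconv μ

lemma convPow_add (m n : ℕ) : convPow μ (m + n) = convPow μ m ∗ₘ convPow μ n := by
  induction n with
  | zero => rw [add_zero, convPow_zero, Measure.mconv_dirac_one]
  | succ n ih => rw [← add_assoc, convPow_succ, convPow_succ, ih, Measure.mconv_assoc]

lemma lintegral_convPow_add (m n : ℕ) {f : G → ℝ≥0∞} (hf : Measurable f) :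
    ∫⁻ g, f g ∂convPow μ (m + n) =
      ∫⁻ h, ∫⁻ h', f (h' * h) ∂convPow μ m ∂convPow μ n := by
  rw [convPow_add, Measure.lintegral_mconv_eq_lintegral_prod hf,
    lintegral_prod_symm' _ (by fun_prop)]

lemma convPow_add_apply (m n : ℕ) {A : Set G} (hA : MeasurableSet A) :
    convPow μ (m + n) A = ∫⁻ h, convPow μ m {h' | h' * h ∈ A} ∂convPow μ n := by
  rw [← lintegral_indicator_one hA, lintegral_convPow_add μ m n (measurable_one.indicator hA)]
  refine lintegral_congr fun h => ?_
  exact lintegral_indicator_one (hA.preimage (measurable_mul_const h))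

lemma convPow_succ_apply (n : ℕ) {A : Set G} (hA : MeasurableSet A) :
    convPow μ (n + 1) A = ∫⁻ h, convPow μ n {h' | h' * h ∈ A} ∂μ := by
  rw [convPow_add_apply μ n 1 hA, convPow_one]

section Integral

variable {μ} {m n : ℕ} {f : G → ℝ}

lemma integrable_mul_prod_convPow (hf : Integrable f (convPow μ (m + n))) :
    Integrable (fun p : G × G => f (p.1 * p.2)) ((convPow μ m).prod (convPow μ n)) := by
  rw [convPow_add, Measure.mconv] at hf
  exact hf.comp_aemeasurable measurable_mul.aemeasurable

lemma integrable_integral_mul_convPow (hf : Integrable f (convPow μ (m + n))) :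
    Integrable (fun g => ∫ h, f (g * h) ∂convPow μ n) (convPow μ m) :=
  (integrable_mul_prod_convPow hf).integral_prod_left

lemma integral_convPow_add (hf : Integrable f (convPow μ (m + n))) :
    ∫ g, f g ∂convPow μ (m + n) = ∫ g, ∫ h, f (g * h) ∂convPow μ n ∂convPow μ m := by
  rw [← integral_prod _ (integrable_mul_prod_convPow hf)]
  rw [convPow_add, Measure.mconv] at hf ⊢
  exact integral_map measurable_mul.aemeasurable hf.aestronglyMeasurable

end Integral

lemma measurable_prod_ofFn (n : ℕ) : Measurable fun g : Fin n → G => (List.ofFn g).prod := by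
  induction n with
  | zero => simp only [List.ofFn_zero, List.prod_nil, measurable_const]
  | succ n ih =>
    simp only [List.ofFn_succ, List.prod_cons]
    exact (measurable_pi_apply 0).mul (ih.comp (by fun_prop))

lemma map_prod_ofFn_pi (n : ℕ) :
    (Measure.pi fun _ : Fin n => μ).map (fun g => (List.ofFn g).prod) = convPow μ n := by
  induction n with
  | zero =>
    rw [Measure.pi_of_empty, Measure.map_dirac' (measurable_prod_ofFn 0), List.ofFn_zero,
      List.prod_nil, convPow_zero]
  | succ n ih =>
    have hm := measurable_prod_ofFn (G := G) n
    have split_first : (fun g : Fin (n + 1) → G => (List.ofFn g).prod) =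
        (fun p : G × G => p.1 * p.2) ∘ Prod.map id (fun g : Fin n → G => (List.ofFn g).prod) ∘
          MeasurableEquiv.piFinSuccAbove (fun _ => G) 0 := by
      funext g
      simp only [List.ofFn_succ, List.prod_cons]
      rfl
    rw [split_first, ← Measure.map_map measurable_mul (by fun_prop),
      ← Measure.map_map (by fun_prop) (MeasurableEquiv.measurable _),
      (measurePreserving_piFinSuccAbove (fun _ => μ) 0).map_eq,
      ← Measure.map_prod_map _ _ measurable_id hm, Measure.map_id, ih, add_comm n 1,
      convPow_add, convPow_one, Measure.mconv]

lemma pi_prod_ofFn_apply (n : ℕ) {A : Set G} (hA : MeasurableSet A) :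
    (Measure.pi fun _ : Fin n => μ) {g | (List.ofFn g).prod ∈ A} = convPow μ n A := by
  rw [← map_prod_ofFn_pi, Measure.map_apply (measurable_prod_ofFn n) hA, Set.preimage]

end ConvolutionPowers

/-! ### Renewal estimates for a cocycle with drift -/

section Green

open scoped ENNReal

variable {G : Type*} [Monoid G] [MeasurableSpace G] [MeasurableMul₂ G]
  (μ : Measure G) [IsProbabilityMeasure μ]

-- Maximum principle for Green functions: starting outside `W`, condition on the first step.
lemma tsum_convPow_le_of_forall_mem {W : Set G} (hW : MeasurableSet W) {K : ℝ≥0∞}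
    (hK : ∀ γ ∈ W, ∑' n, convPow μ n {h | h * γ ∈ W} ≤ K) (γ : G) :
    ∑' n, convPow μ n {h | h * γ ∈ W} ≤ K := by
  refine ENNReal.tsum_le_of_sum_range_le fun N => ?_
  induction N generalizing γ with
  | zero => simp
  | succ N ih =>
    by_cases hγ : γ ∈ W
    · exact (ENNReal.sum_le_tsum _).trans (hK γ hγ)
    have hmeas : ∀ γ : G, MeasurableSet {h | h * γ ∈ W} := fun γ =>
      hW.preimage (measurable_mul_const γ)
    have start_outside : convPow μ 0 {h | h * γ ∈ W} = 0 := by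
      rw [convPow_zero, Measure.dirac_apply' _ (hmeas γ)]
      simp [hγ]
    have first_step (n : ℕ) :
        convPow μ (n + 1) {h | h * γ ∈ W} = ∫⁻ g, convPow μ n {h | h * (g * γ) ∈ W} ∂μ := by
      simp only [convPow_succ_apply μ n (hmeas γ), Set.mem_ofPred_eq, mul_assoc]
    rw [Finset.sum_range_succ', start_outside, add_zero,
      Finset.sum_congr rfl fun n _ => first_step n, ← lintegral_finsetSum']
    · calc _ ≤ ∫⁻ _, K ∂μ := lintegral_mono fun g => ih (g * γ)
        _ = K := by simp
    · intro n _
      have hjoint : MeasurableSet {p : G × G | p.2 * (p.1 * γ) ∈ W} := hW.preimage (by fun_prop)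
      exact (measurable_measure_prodMk_left hjoint).aemeasurable

lemma tsum_measure_Icc_le {Ω : Type*} [MeasurableSpace Ω] (ν : ℕ → Measure Ω) (f : Ω → ℝ)
    {K : ℝ≥0∞} (hK : ∀ t, ∑' n, ν n {ω | f ω - t ∈ Set.Icc 0 1} ≤ K) (s t : ℝ) :
    ∑' n, ν n {ω | f ω - t ∈ Set.Icc 0 s} ≤ (⌊s⌋₊ + 1 : ℕ) * K := by
  have unit_windows : {ω | f ω - t ∈ Set.Icc 0 s} ⊆
      ⋃ j ∈ Finset.range (⌊s⌋₊ + 1), {ω | f ω - (t + j) ∈ Set.Icc (0 : ℝ) 1} := by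
    intro ω hω
    simp only [Set.mem_iUnion, Finset.mem_range]
    refine ⟨⌊f ω - t⌋₊, Nat.lt_succ_of_le (Nat.floor_le_floor hω.2), ?_⟩
    have floor_le := Nat.floor_le hω.1
    have lt_floor := Nat.lt_floor_add_one (f ω - t)
    constructor <;> linarith
  calc ∑' n, ν n {ω | f ω - t ∈ Set.Icc 0 s}
      ≤ ∑' n, ∑ j ∈ Finset.range (⌊s⌋₊ + 1), ν n {ω | f ω - (t + j) ∈ Set.Icc (0 : ℝ) 1} :=
        ENNReal.tsum_le_tsum fun n =>
          (measure_mono unit_windows).trans (measure_biUnion_finset_le _ _)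
    _ = ∑ j ∈ Finset.range (⌊s⌋₊ + 1), ∑' n, ν n {ω | f ω - (t + j) ∈ Set.Icc (0 : ℝ) 1} :=
        Summable.tsum_finsetSum fun _ _ => ENNReal.summable
    _ ≤ ∑ _j ∈ Finset.range (⌊s⌋₊ + 1), K := Finset.sum_le_sum fun _ _ => hK _
    _ = (⌊s⌋₊ + 1 : ℕ) * K := by rw [Finset.sum_const, Finset.card_range, nsmul_eq_mul]

lemma lintegral_convPow_le_pow {f : G → ℝ≥0∞} (hf : Measurable f) (hone : f 1 ≤ 1)
    (hmul : ∀ g h, f (g * h) ≤ f g * f h) (n : ℕ) :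
    ∫⁻ g, f g ∂convPow μ n ≤ (∫⁻ g, f g ∂μ) ^ n := by
  induction n with
  | zero => rwa [convPow_zero, lintegral_dirac' _ hf, pow_zero]
  | succ n ih =>
    calc ∫⁻ g, f g ∂convPow μ (n + 1)
        = ∫⁻ h, ∫⁻ h', f (h' * h) ∂convPow μ n ∂μ := by
          rw [lintegral_convPow_add μ n 1 hf, convPow_one]
      _ ≤ ∫⁻ h, ∫⁻ h', f h' * f h ∂convPow μ n ∂μ :=
          lintegral_mono fun h => lintegral_mono fun h' => hmul h' h
      _ = (∫⁻ g, f g ∂convPow μ n) * ∫⁻ g, f g ∂μ := by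
          simp_rw [lintegral_mul_const _ hf, lintegral_const_mul _ hf]
      _ ≤ (∫⁻ g, f g ∂μ) ^ (n + 1) := by rw [pow_succ]; gcongr

end Green

section ExponentialMoment

variable {G : Type*} [Group G] [MeasurableSpace G] [MeasurableMul₂ G]
  {ℓ : GroupSeminorm G} {μ : Measure G} [IsProbabilityMeasure μ]

lemma integrable_exp_length_convPow (hℓ : Measurable ℓ) {ε : ℝ} (hε : 0 ≤ ε)
    (hexp : Integrable (fun g => Real.exp (ε * ℓ g)) μ) (n : ℕ) :
    Integrable (fun g => Real.exp (ε * ℓ g)) (convPow μ n) := by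
  have hm : Measurable fun g => Real.exp (ε * ℓ g) := by fun_prop
  have lintegral_lt_top : ∫⁻ g, ENNReal.ofReal (Real.exp (ε * ℓ g)) ∂convPow μ n < ⊤ := by
    refine (lintegral_convPow_le_pow μ hm.ennreal_ofReal (by simp) (fun g h => ?_) n).trans_lt
      (ENNReal.pow_lt_top hexp.lintegral_lt_top)
    rw [← ENNReal.ofReal_mul (Real.exp_pos _).le, ← Real.exp_add, ← mul_add]
    gcongr
    exact map_mul_le_add ℓ g h
  refine ⟨hm.aestronglyMeasurable, ?_⟩
  rwa [hasFiniteIntegral_iff_ofReal (Eventually.of_forall fun g => (Real.exp_pos _).le)]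

lemma integrable_of_integrable_exp {Ω : Type*} [MeasurableSpace Ω] {ν : Measure Ω} {f : Ω → ℝ}
    (hf : Measurable f) (hf0 : ∀ ω, 0 ≤ f ω) {ε : ℝ} (hε : 0 < ε)
    (hexp : Integrable (fun ω => Real.exp (ε * f ω)) ν) : Integrable f ν := by
  refine (hexp.const_mul ε⁻¹).mono' hf.aestronglyMeasurable (Eventually.of_forall fun ω => ?_)
  rw [Real.norm_of_nonneg (hf0 ω), ← div_eq_inv_mul, le_div_iff₀ hε]
  linarith [Real.add_one_le_exp (ε * f ω)]

end ExponentialMoment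

section LengthCocycle

open scoped ENNReal

/-- `σ` is a cocycle over the action of `G` on `X`, measurable in the group variable and
dominated by the length `ℓ`. The model is the norm cocycle on the projective line, dominated by
the Cartan projection. -/
structure IsLengthCocycle {G X : Type*} [Group G] [MeasurableSpace G] [MulAction G X]
    (ℓ : GroupSeminorm G) (σ : G → X → ℝ) : Prop where
  map_mul (g h : G) (x : X) : σ (g * h) x = σ g (h • x) + σ h x
  measurable (x : X) : Measurable fun g => σ g x
  abs_le_length (g : G) (x : X) : |σ g x| ≤ ℓ g

variable {G X : Type*} [Group G] [MeasurableSpace G] [MulAction G X]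
  {ℓ : GroupSeminorm G} {σ : G → X → ℝ} {μ : Measure G}

lemma IsLengthCocycle.integrable (hσ : IsLengthCocycle ℓ σ)
    (hℓ : Integrable ℓ μ) (x : X) : Integrable (fun g => σ g x) μ :=
  hℓ.mono' (hσ.measurable x).aestronglyMeasurable
    (Eventually.of_forall fun g => hσ.abs_le_length g x)

variable [MeasurableMul₂ G] [IsProbabilityMeasure μ]

-- Two visits `γ` and `hγ` to the window satisfy `σ(h, γ • x) ≤ ℓ(hγ) - ℓ(γ) ≤ 1`, where `x` is the
-- direction in which `γ` attains its length.
lemma IsLengthCocycle.tsum_length_window_le (hσ : IsLengthCocycle ℓ σ) (hℓ : Measurable ℓ)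
    (hmax : ∀ g, ∃ x, σ g x = ℓ g) {K : ℝ≥0∞}
    (hK : ∀ x, ∑' n, convPow μ n {h | σ h x ≤ 1} ≤ K) (t : ℝ) :
    ∑' n, convPow μ n {g | ℓ g - t ∈ Set.Icc 0 1} ≤ K := by
  have hW : MeasurableSet {g | ℓ g - t ∈ Set.Icc 0 1} :=
    measurableSet_Icc.preimage (hℓ.sub_const t)
  have return_bound : ∀ γ ∈ {g | ℓ g - t ∈ Set.Icc 0 1},
      ∑' n, convPow μ n {h | h * γ ∈ {g | ℓ g - t ∈ Set.Icc 0 1}} ≤ K := by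
    intro γ hγ
    obtain ⟨x, hx⟩ := hmax γ
    refine (ENNReal.tsum_le_tsum fun n => measure_mono fun h hh => ?_).trans (hK (γ • x))
    have hle := (abs_le.1 (hσ.abs_le_length (h * γ) x)).2
    have hmul := hσ.map_mul h γ x
    have hupper := hh.2
    have hlower := hγ.1
    change σ h (γ • x) ≤ 1
    linarith
  simpa only [mul_one, Set.mem_ofPred_eq] using tsum_convPow_le_of_forall_mem μ hW return_bound 1

end LengthCocycle

section ExponentialContraction

open scoped ENNReal

lemma exp_le_one_add_self_add_sq_mul_exp_abs (y : ℝ) :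
    Real.exp y ≤ 1 + y + y ^ 2 * Real.exp |y| := by
  rcases le_or_gt |y| 1 with hy | hy
  · have hquad := (abs_le.1 (Real.abs_exp_sub_one_sub_id_le hy)).2
    nlinarith [sq_nonneg y, Real.one_le_exp (abs_nonneg y)]
  · have hsq : 1 ≤ y ^ 2 := (one_le_sq_iff_one_le_abs y).2 hy.le
    rcases le_total 0 y with h0 | h0
    · rw [abs_of_nonneg h0]
      nlinarith [Real.exp_pos y]
    · rw [abs_of_nonpos h0]
      nlinarith [Real.one_le_exp (neg_nonneg.2 h0), Real.exp_le_one_iff.2 h0,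
        abs_of_nonpos h0]

lemma exp_neg_mul_le {δ ε l y : ℝ} (hε : 0 < ε) (hδ : 0 ≤ δ) (hδε : δ ≤ ε / 2) (hy : |y| ≤ l) :
    Real.exp (-δ * y) ≤ 1 - δ * y + δ ^ 2 * (8 / ε ^ 2 * Real.exp (ε * l)) := by
  have hl : 0 ≤ l := (abs_nonneg y).trans hy
  have abs_bound : |-δ * y| ≤ ε / 2 * l := by
    rw [abs_mul, abs_neg, abs_of_nonneg hδ]
    gcongr
  have sq_le : y ^ 2 ≤ 8 / ε ^ 2 * Real.exp (ε / 2 * l) := by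
    have hquad := Real.quadratic_le_exp_of_nonneg (show 0 ≤ ε / 2 * l by positivity)
    have hyl : y ^ 2 ≤ l ^ 2 := sq_le_sq' (abs_le.1 hy).1 (abs_le.1 hy).2
    rw [div_mul_eq_mul_div, le_div_iff₀ (by positivity)]
    nlinarith [show 0 ≤ ε / 2 * l by positivity, mul_le_mul_of_nonneg_right hyl (sq_nonneg ε)]
  calc Real.exp (-δ * y)
      ≤ 1 + -δ * y + (-δ * y) ^ 2 * Real.exp |-δ * y| :=
        exp_le_one_add_self_add_sq_mul_exp_abs _
    _ = 1 - δ * y + δ ^ 2 * (y ^ 2 * Real.exp |-δ * y|) := by ring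
    _ ≤ 1 - δ * y + δ ^ 2 * (8 / ε ^ 2 * Real.exp (ε / 2 * l) * Real.exp (ε / 2 * l)) := by
        gcongr
    _ = 1 - δ * y + δ ^ 2 * (8 / ε ^ 2 * Real.exp (ε * l)) := by
        rw [mul_assoc (8 / ε ^ 2), ← Real.exp_add, ← add_mul, add_halves]

lemma exists_integral_exp_neg_le {Ω : Type*} [MeasurableSpace Ω] {ν : Measure Ω}
    [IsProbabilityMeasure ν] {ℓ : Ω → ℝ} (hℓ : Integrable ℓ ν) {ε : ℝ} (hε : 0 < ε)
    (hexp : Integrable (fun ω => Real.exp (ε * ℓ ω)) ν) :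
    ∃ δ ∈ Set.Ioc 0 ε, ∃ ρ < 1, ∀ f : Ω → ℝ, AEStronglyMeasurable f ν → (∀ ω, |f ω| ≤ ℓ ω) →
      1 ≤ ∫ ω, f ω ∂ν → ∫ ω, Real.exp (-δ * f ω) ∂ν ≤ ρ := by
  set A : ℝ := ∫ ω, 8 / ε ^ 2 * Real.exp (ε * ℓ ω) ∂ν
  have hA0 : 0 ≤ A := integral_nonneg fun ω => by positivity
  set δ : ℝ := min (ε / 2) (1 / (2 * (A + 1)))
  have hδ : 0 < δ := by positivity
  have hδA : δ * A ≤ 1 / 2 := by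
    calc δ * A ≤ 1 / (2 * (A + 1)) * (A + 1) := by
          gcongr
          · exact min_le_right _ _
          · linarith
      _ = 1 / 2 := by field_simp
  refine ⟨δ, ⟨hδ, (min_le_left _ _).trans (by linarith)⟩, 1 - δ / 2, by linarith,
    fun f hf hfℓ hmean => ?_⟩
  have hf_int : Integrable f ν := hℓ.mono' hf (Eventually.of_forall hfℓ)
  have hquad_int : Integrable (fun ω => 8 / ε ^ 2 * Real.exp (ε * ℓ ω)) ν := hexp.const_mul _
  have hlin_int : Integrable (fun ω => 1 - δ * f ω) ν :=
    (integrable_const 1).sub (hf_int.const_mul δ)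
  calc ∫ ω, Real.exp (-δ * f ω) ∂ν
      ≤ ∫ ω, (1 - δ * f ω + δ ^ 2 * (8 / ε ^ 2 * Real.exp (ε * ℓ ω))) ∂ν :=
        integral_mono_of_nonneg (Eventually.of_forall fun ω => (Real.exp_pos _).le)
          (hlin_int.add (hquad_int.const_mul _))
          (Eventually.of_forall fun ω => exp_neg_mul_le hε hδ.le (min_le_left _ _) (hfℓ ω))
    _ = 1 - δ * ∫ ω, f ω ∂ν + δ ^ 2 * A := by
        rw [integral_add hlin_int (hquad_int.const_mul _),
          integral_sub (integrable_const 1) (hf_int.const_mul δ), integral_const_mul,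
          integral_const_mul, integral_const, probReal_univ, one_smul]
    _ ≤ 1 - δ / 2 := by nlinarith [mul_le_mul_of_nonneg_left hδA hδ.le]

lemma tsum_lt_top_of_submultiplicative {a : ℕ → ℝ≥0∞} (hmul : ∀ m n, a (m + n) ≤ a m * a n)
    (hfin : ∀ n, a n ≠ ⊤) {N : ℕ} (hN : 0 < N) (hlt : a N < 1) : ∑' n, a n < ⊤ := by
  have : NeZero N := ⟨hN.ne'⟩
  have geometric : ∀ q r, a (q * N + r) ≤ a N ^ q * a r := by
    intro q r
    induction q with
    | zero => simp
    | succ q ih =>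
      calc a ((q + 1) * N + r) = a (N + (q * N + r)) := by ring_nf
        _ ≤ a N * (a N ^ q * a r) := (hmul _ _).trans (by gcongr)
        _ = a N ^ (q + 1) * a r := by rw [pow_succ', mul_assoc]
  calc ∑' n, a n = ∑' p : ℕ × Fin N, a (p.1 * N + p.2) := (Nat.divModEquiv N).symm.tsum_eq a |>.symm
    _ ≤ ∑' p : ℕ × Fin N, a N ^ p.1 * a p.2 := ENNReal.tsum_le_tsum fun p => geometric p.1 p.2
    _ = (∑' q, a N ^ q) * ∑ r : Fin N, a r := by
        rw [ENNReal.tsum_prod (f := fun q (r : Fin N) => a N ^ q * a r)]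
        simp_rw [ENNReal.tsum_mul_left, tsum_fintype, ENNReal.tsum_mul_right]
    _ < ⊤ := by
        rw [ENNReal.tsum_geometric]
        exact ENNReal.mul_lt_top (ENNReal.inv_lt_top.2 (tsub_pos_of_lt hlt))
          (ENNReal.sum_lt_top.2 fun r _ => (hfin r).lt_top)

end ExponentialContraction

section Drift

open scoped ENNReal

variable {G X : Type*} [Group G] [MeasurableSpace G] [MulAction G X]
  {ℓ : GroupSeminorm G} {σ : G → X → ℝ} {μ : Measure G}

/-- The uniform Laplace transform `sup_x 𝔼 exp(-δ σ(g, x))` of the cocycle along the random walk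
after `n` steps; the cocycle identity makes it submultiplicative in `n`. -/
def supLaplace (μ : Measure G) (σ : G → X → ℝ) (δ : ℝ) (n : ℕ) : ℝ≥0∞ :=
  ⨆ x, ∫⁻ g, ENNReal.ofReal (Real.exp (-δ * σ g x)) ∂convPow μ n

namespace IsLengthCocycle

lemma measurable_exp (hσ : IsLengthCocycle ℓ σ) (δ : ℝ) (x : X) :
    Measurable fun g => Real.exp (-δ * σ g x) := by
  have := hσ.measurable x
  fun_prop

lemma exp_neg_mul_le_exp_length (hσ : IsLengthCocycle ℓ σ) {δ ε : ℝ} (hδ : 0 ≤ δ) (hδε : δ ≤ ε)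
    (g : G) (x : X) : Real.exp (-δ * σ g x) ≤ Real.exp (ε * ℓ g) := by
  refine Real.exp_le_exp.2 ?_
  nlinarith [mul_le_mul_of_nonneg_left (neg_le_of_abs_le (hσ.abs_le_length g x)) hδ,
    mul_le_mul_of_nonneg_right hδε (apply_nonneg ℓ g)]

lemma integrable_exp (hσ : IsLengthCocycle ℓ σ) {δ ε : ℝ} (hδ : 0 ≤ δ) (hδε : δ ≤ ε)
    {ν : Measure G} (hexp : Integrable (fun g => Real.exp (ε * ℓ g)) ν) (x : X) :
    Integrable (fun g => Real.exp (-δ * σ g x)) ν :=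
  hexp.mono' (hσ.measurable_exp δ x).aestronglyMeasurable <| Eventually.of_forall fun g => by
    rw [Real.norm_of_nonneg (Real.exp_pos _).le]
    exact hσ.exp_neg_mul_le_exp_length hδ hδε g x

lemma supLaplace_ne_top (hσ : IsLengthCocycle ℓ σ) {δ ε : ℝ} (hδ : 0 ≤ δ) (hδε : δ ≤ ε) {n : ℕ}
    (hexp : Integrable (fun g => Real.exp (ε * ℓ g)) (convPow μ n)) :
    supLaplace μ σ δ n ≠ ⊤ :=
  ((iSup_le fun x => lintegral_mono fun g =>
    ENNReal.ofReal_le_ofReal (hσ.exp_neg_mul_le_exp_length hδ hδε g x)).trans_lt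
      hexp.lintegral_lt_top).ne

lemma convPow_le_one_le_supLaplace (hσ : IsLengthCocycle ℓ σ) {δ : ℝ} (hδ : 0 ≤ δ) (n : ℕ)
    (x : X) :
    convPow μ n {g | σ g x ≤ 1} ≤ ENNReal.ofReal (Real.exp δ) * supLaplace μ σ δ n := by
  have hmeas := (hσ.measurable_exp δ x).ennreal_ofReal
  calc convPow μ n {g | σ g x ≤ 1}
      ≤ ∫⁻ g, ENNReal.ofReal (Real.exp δ) * ENNReal.ofReal (Real.exp (-δ * σ g x))
          ∂convPow μ n := by
        refine meas_le_lintegral₀ (hmeas.const_mul _).aemeasurable fun g hg => ?_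
        rw [← ENNReal.ofReal_mul (Real.exp_pos δ).le, ← Real.exp_add]
        refine ENNReal.one_le_ofReal.2 (Real.one_le_exp ?_)
        linarith [mul_le_mul_of_nonneg_left (show σ g x ≤ 1 from hg) hδ]
    _ ≤ ENNReal.ofReal (Real.exp δ) * supLaplace μ σ δ n := by
        rw [lintegral_const_mul _ hmeas]
        gcongr
        exact le_iSup_of_le x le_rfl

variable [MeasurableMul₂ G] [IsProbabilityMeasure μ]

lemma supLaplace_add_le (hσ : IsLengthCocycle ℓ σ) (δ : ℝ) (m n : ℕ) :
    supLaplace μ σ δ (m + n) ≤ supLaplace μ σ δ m * supLaplace μ σ δ n := by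
  have hmeas := fun x => (hσ.measurable_exp δ x).ennreal_ofReal
  refine iSup_le fun x => ?_
  calc ∫⁻ g, ENNReal.ofReal (Real.exp (-δ * σ g x)) ∂convPow μ (m + n)
      = ∫⁻ h, (∫⁻ h', ENNReal.ofReal (Real.exp (-δ * σ h' (h • x))) ∂convPow μ m) *
          ENNReal.ofReal (Real.exp (-δ * σ h x)) ∂convPow μ n := by
        rw [lintegral_convPow_add μ m n (hmeas x)]
        refine lintegral_congr fun h => ?_
        simp_rw [hσ.map_mul _ h x, mul_add, Real.exp_add, ENNReal.ofReal_mul (Real.exp_pos _).le]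
        exact lintegral_mul_const _ (hmeas _)
    _ ≤ ∫⁻ h, supLaplace μ σ δ m * ENNReal.ofReal (Real.exp (-δ * σ h x)) ∂convPow μ n :=
        lintegral_mono fun h => by gcongr; exact le_iSup_of_le (h • x) le_rfl
    _ ≤ supLaplace μ σ δ m * supLaplace μ σ δ n := by
        rw [lintegral_const_mul _ (hmeas x)]
        gcongr
        exact le_iSup_of_le x le_rfl

lemma exists_tsum_le_one_le (hσ : IsLengthCocycle ℓ σ) (hℓ : Measurable ℓ)
    {ε : ℝ} (hε : 0 < ε) (hexp : Integrable (fun g => Real.exp (ε * ℓ g)) μ) {N : ℕ} (hN : 0 < N)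
    (hdrift : ∀ x, 1 ≤ ∫ g, σ g x ∂convPow μ N) :
    ∃ K < ⊤, ∀ x, ∑' n, convPow μ n {g | σ g x ≤ 1} ≤ K := by
  have hexp_pow := integrable_exp_length_convPow hℓ hε.le hexp
  obtain ⟨δ, ⟨hδ, hδε⟩, ρ, hρ, hcontr⟩ := exists_integral_exp_neg_le
    (integrable_of_integrable_exp hℓ (apply_nonneg ℓ) hε (hexp_pow N)) hε (hexp_pow N)
  have contraction : supLaplace μ σ δ N < 1 := by
    refine (iSup_le fun x => ?_).trans_lt (ENNReal.ofReal_lt_one.2 hρ)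
    rw [← ofReal_integral_eq_lintegral_ofReal (hσ.integrable_exp hδ.le hδε (hexp_pow N) x)
      (Eventually.of_forall fun g => (Real.exp_pos _).le)]
    exact ENNReal.ofReal_le_ofReal
      (hcontr _ (hσ.measurable x).aestronglyMeasurable (hσ.abs_le_length · x) (hdrift x))
  have summable_laplace : ∑' n, supLaplace μ σ δ n < ⊤ :=
    tsum_lt_top_of_submultiplicative (hσ.supLaplace_add_le δ)
      (fun n => hσ.supLaplace_ne_top hδ.le hδε (hexp_pow n)) hN contraction
  refine ⟨ENNReal.ofReal (Real.exp δ) * ∑' n, supLaplace μ σ δ n,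
    ENNReal.mul_lt_top ENNReal.ofReal_lt_top summable_laplace, fun x => ?_⟩
  rw [← ENNReal.tsum_mul_left]
  exact ENNReal.tsum_le_tsum fun n => hσ.convPow_le_one_le_supLaplace hδ.le n x

end IsLengthCocycle

end Drift

section NonConcentration

variable {G X : Type*} [Group G] [MeasurableSpace G] [MeasurableMul₂ G] [MulAction G X]
  {ℓ : GroupSeminorm G} {σ : G → X → ℝ}

namespace IsLengthCocycle

lemma integrable_mul_left (hσ : IsLengthCocycle ℓ σ) {ν : Measure G} [IsFiniteMeasure ν]
    (hℓ : Integrable ℓ ν) (g : G) (x : X) : Integrable (fun h => σ (g * h) x) ν :=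
  ((integrable_const (ℓ g)).add hℓ).mono'
    ((hσ.measurable x).comp (measurable_const_mul g)).aestronglyMeasurable
    (Eventually.of_forall fun h => (hσ.abs_le_length _ x).trans (map_mul_le_add ℓ g h))

lemma le_integral_mul_left (hσ : IsLengthCocycle ℓ σ) {ν : Measure G} [IsProbabilityMeasure ν]
    (hℓ : Integrable ℓ ν) {g : G} {x : X} {B : Set X} (hB : MeasurableSet {h : G | h • x ∈ B})
    {a : ℝ} (ha : 0 ≤ a) (hgood : ∀ y ∉ B, ℓ g - a ≤ σ g y) :
    ℓ g - a - 2 * ℓ g * ν.real {h | h • x ∈ B} + ∫ h, σ h x ∂ν ≤ ∫ h, σ (g * h) x ∂ν := by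
  set E : Set G := {h | h • x ∈ B}
  have hind : Integrable (E.indicator fun _ => 2 * ℓ g) ν := (integrable_const _).indicator hB
  have hconst : Integrable (fun _ => ℓ g - a) ν := integrable_const _
  have hgain : Integrable (fun h => ℓ g - a - E.indicator (fun _ => 2 * ℓ g) h) ν :=
    hconst.sub hind
  have pointwise (h : G) : ℓ g - a - E.indicator (fun _ => 2 * ℓ g) h + σ h x ≤ σ (g * h) x := by
    rw [hσ.map_mul]
    by_cases hh : h ∈ E
    · rw [Set.indicator_of_mem hh]
      linarith [neg_le_of_abs_le (hσ.abs_le_length g (h • x))]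
    · rw [Set.indicator_of_notMem hh]
      linarith [hgood (h • x) hh]
  calc ℓ g - a - 2 * ℓ g * ν.real E + ∫ h, σ h x ∂ν
      = ∫ h, (ℓ g - a - E.indicator (fun _ => 2 * ℓ g) h + σ h x) ∂ν := by
        rw [integral_add hgain (hσ.integrable hℓ x), integral_sub hconst hind,
          integral_indicator_const _ hB, integral_const, probReal_univ, one_smul, smul_eq_mul,
          mul_comm (ν.real E)]
    _ ≤ ∫ h, σ (g * h) x ∂ν :=
        integral_mono (hgain.add (hσ.integrable hℓ x)) (hσ.integrable_mul_left hℓ g x) pointwise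

variable {μ : Measure G} [IsProbabilityMeasure μ]

lemma integral_convPow_sub_le (hσ : IsLengthCocycle ℓ σ) (hℓ : ∀ n, Integrable ℓ (convPow μ n))
    (k n : ℕ) (x : X) :
    ∫ h, σ h x ∂convPow μ n - ∫ g, ℓ g ∂convPow μ k ≤ ∫ h, σ h x ∂convPow μ (k + n) := by
  rw [integral_convPow_add (hσ.integrable (hℓ _) x)]
  calc ∫ h, σ h x ∂convPow μ n - ∫ g, ℓ g ∂convPow μ k
      = ∫ g, (∫ h, σ h x ∂convPow μ n - ℓ g) ∂convPow μ k := by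
        rw [integral_sub (integrable_const _) (hℓ k), integral_const, probReal_univ, one_smul]
    _ ≤ ∫ g, ∫ h, σ (g * h) x ∂convPow μ n ∂convPow μ k := by
        refine integral_mono ((integrable_const _).sub (hℓ k))
          (integrable_integral_mul_convPow (hσ.integrable (hℓ _) x)) fun g => ?_
        have worst_case := hσ.le_integral_mul_left (hℓ n) (g := g) (x := x) (B := Set.univ)
          MeasurableSet.univ le_rfl fun y hy => (hy trivial).elim
        simp only [Set.mem_univ, Set.ofPred_true, probReal_univ] at worst_case
        linarith

lemma le_sum_integral_mul_left (hσ : IsLengthCocycle ℓ σ)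
    (hℓ : ∀ n, Integrable ℓ (convPow μ n)) {g : G} {x : X} {B : Set X}
    (hB : MeasurableSet {h : G | h • x ∈ B}) {a : ℝ} (ha : 0 ≤ a)
    (hgood : ∀ y ∉ B, ℓ g - a ≤ σ g y) {N : ℕ} {θ : ℝ}
    (hrare : ∑ n ∈ Finset.range N, (convPow μ n).real {h | h • x ∈ B} ≤ θ * N) :
    N * ((1 - 2 * θ) * ℓ g - a) + ∑ n ∈ Finset.range N, ∫ h, σ h x ∂convPow μ n ≤
      ∑ n ∈ Finset.range N, ∫ h, σ (g * h) x ∂convPow μ n := by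
  calc N * ((1 - 2 * θ) * ℓ g - a) + ∑ n ∈ Finset.range N, ∫ h, σ h x ∂convPow μ n
      ≤ N * (ℓ g - a) - 2 * ℓ g * ∑ n ∈ Finset.range N, (convPow μ n).real {h | h • x ∈ B} +
          ∑ n ∈ Finset.range N, ∫ h, σ h x ∂convPow μ n := by
        linarith [mul_le_mul_of_nonneg_left hrare (apply_nonneg ℓ g)]
    _ = ∑ n ∈ Finset.range N, (ℓ g - a - 2 * ℓ g * (convPow μ n).real {h | h • x ∈ B} +
          ∫ h, σ h x ∂convPow μ n) := by
        rw [Finset.sum_add_distrib, Finset.sum_sub_distrib, ← Finset.mul_sum, Finset.sum_const,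
          Finset.card_range, nsmul_eq_mul]
    _ ≤ ∑ n ∈ Finset.range N, ∫ h, σ (g * h) x ∂convPow μ n :=
        Finset.sum_le_sum fun n _ => hσ.le_integral_mul_left (hℓ n) hB ha hgood

/-- For every `g` the cocycle `σ g` is within `a` of its maximal possible value `ℓ g` outside a set
which the random walk, started anywhere, visits with frequency at most `θ` during its first `N`
steps. -/
def IsMostlyMaximal (μ : Measure G) (ℓ : GroupSeminorm G) (σ : G → X → ℝ) (N : ℕ) (θ a : ℝ) :
    Prop :=
  ∀ g, ∃ B : Set X, (∀ y ∉ B, ℓ g - a ≤ σ g y) ∧ ∀ x, MeasurableSet {h : G | h • x ∈ B} ∧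
    ∑ n ∈ Finset.range N, (convPow μ n).real {h | h • x ∈ B} ≤ θ * N

lemma le_sum_integral_convPow_add (hσ : IsLengthCocycle ℓ σ)
    (hℓ : ∀ n, Integrable ℓ (convPow μ n)) {N : ℕ} {θ a : ℝ} (ha : 0 ≤ a)
    (hmax : IsMostlyMaximal μ ℓ σ N θ a) (m : ℕ) (x : X) :
    N * ((1 - 2 * θ) * ∫ g, ℓ g ∂convPow μ m - a) +
        ∑ n ∈ Finset.range N, ∫ h, σ h x ∂convPow μ n ≤
      ∑ n ∈ Finset.range N, ∫ h, σ h x ∂convPow μ (m + n) := by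
  set S : ℝ := ∑ n ∈ Finset.range N, ∫ h, σ h x ∂convPow μ n
  have hint : Integrable (fun g => N * ((1 - 2 * θ) * ℓ g - a)) (convPow μ m) :=
    (((hℓ m).const_mul _).sub (integrable_const a)).const_mul _
  have hinner (n : ℕ) :
      Integrable (fun g => ∫ h, σ (g * h) x ∂convPow μ n) (convPow μ m) :=
    integrable_integral_mul_convPow (hσ.integrable (hℓ _) x)
  calc N * ((1 - 2 * θ) * ∫ g, ℓ g ∂convPow μ m - a) + S
      = ∫ g, (N * ((1 - 2 * θ) * ℓ g - a) + S) ∂convPow μ m := by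
        rw [integral_add hint (integrable_const S), integral_const_mul,
          integral_sub ((hℓ m).const_mul _) (integrable_const a), integral_const_mul,
          integral_const, integral_const, probReal_univ, one_smul, one_smul]
    _ ≤ ∫ g, ∑ n ∈ Finset.range N, ∫ h, σ (g * h) x ∂convPow μ n ∂convPow μ m := by
        refine integral_mono (hint.add (integrable_const S))
          (integrable_finsetSum _ fun n _ => hinner n) fun g => ?_
        obtain ⟨B, hgood, hB⟩ := hmax g
        exact hσ.le_sum_integral_mul_left hℓ (hB x).1 ha hgood (hB x).2
    _ = ∑ n ∈ Finset.range N, ∫ h, σ h x ∂convPow μ (m + n) := by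
        rw [integral_finsetSum _ fun n _ => hinner n]
        exact Finset.sum_congr rfl fun n _ =>
          (integral_convPow_add (hσ.integrable (hℓ _) x)).symm

lemma exists_one_le_integral (hσ : IsLengthCocycle ℓ σ)
    (hℓ : ∀ n, Integrable ℓ (convPow μ n)) {N : ℕ} (hN : 0 < N) {θ a : ℝ} (hθ : θ < 1 / 2)
    (ha : 0 ≤ a) (hmax : IsMostlyMaximal μ ℓ σ N θ a)
    (hunbdd : ∀ R, ∃ m, R ≤ ∫ g, ℓ g ∂convPow μ m) :
    ∃ M, 0 < M ∧ ∀ x, 1 ≤ ∫ g, σ g x ∂convPow μ M := by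
  obtain ⟨K, hK⟩ : ∃ K, ∀ n ≤ N, ∫ g, ℓ g ∂convPow μ n ≤ K :=
    ((Set.finite_Iic N).image fun n => ∫ g, ℓ g ∂convPow μ n).bddAbove.imp
      fun K hK n hn => hK ⟨n, hn, rfl⟩
  obtain ⟨m, hm⟩ := hunbdd ((1 + a + 2 * K) / (1 - 2 * θ))
  refine ⟨m + N, by omega, fun x => ?_⟩
  have gain := hσ.le_sum_integral_convPow_add hℓ ha hmax m x
  have start_bound : ∑ _n ∈ Finset.range N, -K ≤
      ∑ n ∈ Finset.range N, ∫ h, σ h x ∂convPow μ n := by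
    refine Finset.sum_le_sum fun n hn => ?_
    refine (neg_le_neg (hK n (Finset.mem_range.1 hn).le)).trans ?_
    rw [← integral_neg]
    exact integral_mono (hℓ n).neg (hσ.integrable (hℓ n) x)
      fun g => neg_le_of_abs_le (hσ.abs_le_length g x)
  have end_bound : ∑ n ∈ Finset.range N, ∫ h, σ h x ∂convPow μ (m + n) ≤
      ∑ _n ∈ Finset.range N, (∫ h, σ h x ∂convPow μ (m + N) + K) := by
    refine Finset.sum_le_sum fun n hn => ?_
    have hn := Finset.mem_range.1 hn
    have hsteps := hσ.integral_convPow_sub_le hℓ (N - n) (m + n) x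
    rw [show N - n + (m + n) = m + N by omega] at hsteps
    linarith [hK (N - n) (Nat.sub_le N n)]
  rw [Finset.sum_const, Finset.card_range, nsmul_eq_mul] at start_bound end_bound
  rw [div_le_iff₀' (by linarith)] at hm
  have hN' : (0 : ℝ) < N := Nat.cast_pos.2 hN
  refine le_of_mul_le_mul_left ?_ hN'
  linarith [mul_le_mul_of_nonneg_left hm hN'.le]

end IsLengthCocycle

end NonConcentration

/-! ### Invariant sets of extremal points -/

section AEInvariant

open scoped ENNReal

/-- Almost every increment of the random walk maps `M` into itself. -/
def IsAEInvariant {G X : Type*} [MeasurableSpace G] [SMul G X] (μ : Measure G) (M : Set X) : Prop :=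
  ∀ x ∈ M, ∀ᵐ g ∂μ, g • x ∈ M

variable {G X : Type*} [MeasurableSpace G] [SMul G X] {μ : Measure G} [IsProbabilityMeasure μ]

lemma isAEInvariant_argmin {f : X → ℝ≥0∞} {x₀ : X} (hmin : ∀ x, f x₀ ≤ f x) (hfin : f x₀ ≠ ⊤)
    (hmeas : ∀ x, Measurable fun g : G => f (g • x)) (hmean : ∀ x, ∫⁻ g, f (g • x) ∂μ ≤ f x) :
    IsAEInvariant μ {x | f x = f x₀} := by
  intro x hx
  have hae : (fun _ => f x₀) =ᵐ[μ] fun g => f (g • x) :=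
    ae_eq_of_ae_le_of_lintegral_le (Eventually.of_forall fun g => hmin _) (by simpa using hfin)
      (hmeas x).aemeasurable (by simpa using (hmean x).trans_eq hx)
  filter_upwards [hae] with g hg using hg.symm

lemma isAEInvariant_argmax {f : X → ℝ≥0∞} {x₀ : X} (hmax : ∀ x, f x ≤ f x₀) (hfin : f x₀ ≠ ⊤)
    (hmean : ∀ x, f x ≤ ∫⁻ g, f (g • x) ∂μ) :
    IsAEInvariant μ {x | f x = f x₀} := by
  intro x hx
  have hle : ∫⁻ g, f (g • x) ∂μ ≤ f x₀ := by
    simpa using lintegral_mono (μ := μ) fun g => hmax (g • x)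
  exact ae_eq_of_ae_le_of_lintegral_le (Eventually.of_forall fun g => hmax _)
    (hle.trans_lt hfin.lt_top).ne aemeasurable_const (by simpa using hx.symm.le.trans (hmean x))

end AEInvariant

section CompactSemigroup

variable {G : Type*} [Group G] [TopologicalSpace G] [IsTopologicalGroup G] [T2Space G]

lemma inv_mem_of_isCompact_subsemigroup {S : Set G} (hS : IsCompact S)
    (hmul : ∀ g ∈ S, ∀ h ∈ S, g * h ∈ S) {g : G} (hg : g ∈ S) : g⁻¹ ∈ S := by
  obtain ⟨_, ⟨s, hs, rfl⟩, hidem⟩ := exists_idempotent_in_compact_subsemigroup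
    (fun r : G => continuous_mul_const r) ((g * ·) '' S) ⟨g * g, g, hg, rfl⟩
    (hS.image (continuous_const_mul g)) (by
      rintro _ ⟨a, ha, rfl⟩ _ ⟨b, hb, rfl⟩
      exact ⟨a * (g * b), hmul a ha _ (hmul g hg b hb), by simp only [mul_assoc]⟩)
  rwa [← eq_inv_of_mul_eq_one_right (mul_eq_left.1 hidem)]

lemma exists_isCompact_closure_subset {M : Set G} (hM : IsCompact M) (hne : M.Nonempty) {s : Set G}
    (hs : ∀ g ∈ s, ∀ x ∈ M, g * x ∈ M) :
    ∃ K, IsCompact K ∧ (Subgroup.closure s : Set G) ⊆ K := by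
  obtain ⟨x₀, hx₀⟩ := hne
  set S : Set G := {g | ∀ x ∈ M, g * x ∈ M} with hS_def
  have hS_compact : IsCompact S := by
    refine (hM.image (continuous_mul_const x₀⁻¹)).of_isClosed_subset ?_
      fun g hg => ⟨g * x₀, hg x₀ hx₀, mul_inv_cancel_right g x₀⟩
    simp only [hS_def, Set.ofPred_forall]
    exact isClosed_iInter fun x => isClosed_iInter fun _ =>
      hM.isClosed.preimage (continuous_mul_const x)
  have hS_mul : ∀ g ∈ S, ∀ h ∈ S, g * h ∈ S := fun g hg h hh x hx => by
    rw [mul_assoc]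
    exact hg _ (hh x hx)
  refine ⟨S, hS_compact, fun g hg => ?_⟩
  induction hg using Subgroup.closure_induction with
  | mem g hg => exact hs g hg
  | one => exact fun x hx => by rwa [one_mul]
  | mul g h _ _ hg hh => exact hS_mul g hg h hh
  | inv g _ hg => exact inv_mem_of_isCompact_subsemigroup hS_compact hS_mul hg

end CompactSemigroup

section AsymptoticLength

open scoped ENNReal

lemma ofReal_length_mul_le {G : Type*} [Group G] {ℓ : GroupSeminorm G} (g h : G) :
    ENNReal.ofReal (ℓ (g * h)) ≤ ENNReal.ofReal (ℓ g) + ENNReal.ofReal (ℓ h) :=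
  (ENNReal.ofReal_le_ofReal (map_mul_le_add ℓ g h)).trans ENNReal.ofReal_add_le

variable {G : Type*} [Group G] [MeasurableSpace G]

/-- The asymptotic mean length `lim infₙ 𝔼 ℓ(gₙ ⋯ g₁ g)` of the random walk started at `g`. If the
mean length stays bounded this is a proper superharmonic function, whose minimum set is
invariant. -/
def asymptoticLength (μ : Measure G) (ℓ : GroupSeminorm G) (g : G) : ℝ≥0∞ :=
  liminf (fun n => ∫⁻ h, ENNReal.ofReal (ℓ (h * g)) ∂convPow μ n) atTop

variable {μ : Measure G} {ℓ : GroupSeminorm G} [MeasurableMul₂ G] [IsProbabilityMeasure μ]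

lemma asymptoticLength_le_add (g g' : G) :
    asymptoticLength μ ℓ g ≤ asymptoticLength μ ℓ g' + ENNReal.ofReal (ℓ (g'⁻¹ * g)) := by
  rw [asymptoticLength, asymptoticLength,
    ← liminf_add_const atTop _ _ (by isBoundedDefault) (by isBoundedDefault)]
  refine liminf_le_liminf (Eventually.of_forall fun n => ?_)
  calc ∫⁻ h, ENNReal.ofReal (ℓ (h * g)) ∂convPow μ n
      ≤ ∫⁻ h, (ENNReal.ofReal (ℓ (h * g')) + ENNReal.ofReal (ℓ (g'⁻¹ * g))) ∂convPow μ n :=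
        lintegral_mono fun h => by
          simpa [mul_assoc] using ofReal_length_mul_le (ℓ := ℓ) (h * g') (g'⁻¹ * g)
    _ = ∫⁻ h, ENNReal.ofReal (ℓ (h * g')) ∂convPow μ n + ENNReal.ofReal (ℓ (g'⁻¹ * g)) := by
        rw [lintegral_add_right _ measurable_const, lintegral_const, measure_univ, mul_one]

lemma length_le_asymptoticLength_add (hℓ : Measurable ℓ) {R : ℝ≥0∞}
    (hR : ∀ n, ∫⁻ h, ENNReal.ofReal (ℓ h) ∂convPow μ n ≤ R) (g : G) :
    ENNReal.ofReal (ℓ g) ≤ asymptoticLength μ ℓ g + R := by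
  rw [asymptoticLength, ← liminf_add_const atTop _ _ (by isBoundedDefault) (by isBoundedDefault)]
  refine le_liminf_of_le (by isBoundedDefault) (Eventually.of_forall fun n => ?_)
  calc ENNReal.ofReal (ℓ g)
      = ∫⁻ _, ENNReal.ofReal (ℓ g) ∂convPow μ n := by simp
    _ ≤ ∫⁻ h, (ENNReal.ofReal (ℓ h) + ENNReal.ofReal (ℓ (h * g))) ∂convPow μ n :=
        lintegral_mono fun h => by
          simpa using ofReal_length_mul_le (ℓ := ℓ) h⁻¹ (h * g)
    _ ≤ ∫⁻ h, ENNReal.ofReal (ℓ (h * g)) ∂convPow μ n + R := by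
        rw [lintegral_add_left hℓ.ennreal_ofReal, add_comm]
        gcongr
        exact hR n

lemma lintegral_asymptoticLength_mul_le (hℓ : Measurable ℓ) (g : G) :
    ∫⁻ h, asymptoticLength μ ℓ (h * g) ∂μ ≤ asymptoticLength μ ℓ g := by
  have hmeas (n : ℕ) :
      Measurable fun h => ∫⁻ h', ENNReal.ofReal (ℓ (h' * (h * g))) ∂convPow μ n := by
    have hjoint : Measurable fun p : G × G => ENNReal.ofReal (ℓ (p.2 * (p.1 * g))) := by fun_prop
    exact hjoint.lintegral_prod_right'
  have one_more_step (n : ℕ) : ∫⁻ h, ∫⁻ h', ENNReal.ofReal (ℓ (h' * (h * g))) ∂convPow μ n ∂μ =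
      ∫⁻ h, ENNReal.ofReal (ℓ (h * g)) ∂convPow μ (n + 1) := by
    rw [lintegral_convPow_add μ n 1 (by fun_prop), convPow_one]
    simp only [mul_assoc]
  calc ∫⁻ h, asymptoticLength μ ℓ (h * g) ∂μ
      ≤ liminf (fun n => ∫⁻ h, ENNReal.ofReal (ℓ (h * g)) ∂convPow μ (n + 1)) atTop := by
        simpa only [asymptoticLength, one_more_step] using
          lintegral_liminf_le (μ := μ) (u := atTop) hmeas
    _ = asymptoticLength μ ℓ g :=
        liminf_nat_add (fun n => ∫⁻ h, ENNReal.ofReal (ℓ (h * g)) ∂convPow μ n) 1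

variable [TopologicalSpace G] [IsTopologicalGroup G]

lemma lowerSemicontinuous_asymptoticLength (hℓ : Continuous ℓ) :
    LowerSemicontinuous (asymptoticLength μ ℓ) := by
  intro g' y hy
  have length_tendsto :
      Tendsto (fun g => y + ENNReal.ofReal (ℓ (g⁻¹ * g'))) (nhds g') (nhds y) := by
    have hcont : Continuous fun g => y + ENNReal.ofReal (ℓ (g⁻¹ * g')) :=
      continuous_const.add (ENNReal.continuous_ofReal.comp (hℓ.comp (by fun_prop)))
    simpa using hcont.tendsto g'
  filter_upwards [length_tendsto.eventually_lt_const hy] with g hg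
  exact lt_of_add_lt_add_right (hg.trans_le (asymptoticLength_le_add g' g))

lemma exists_isCompact_isAEInvariant [BorelSpace G] (hℓ : Continuous ℓ)
    (hproper : ∀ r, IsCompact {g | ℓ g ≤ r}) {R : ℝ≥0∞} (hR_top : R ≠ ⊤)
    (hR : ∀ n, ∫⁻ h, ENNReal.ofReal (ℓ h) ∂convPow μ n ≤ R) :
    ∃ M : Set G, IsCompact M ∧ M.Nonempty ∧ IsAEInvariant μ M := by
  have hlsc := lowerSemicontinuous_asymptoticLength (μ := μ) hℓ
  have hΦ_one : asymptoticLength μ ℓ 1 ≤ R := by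
    refine (liminf_le_liminf (v := fun _ => R) (Eventually.of_forall fun n => ?_)).trans_eq
      (liminf_const R)
    simpa using hR n
  have sublevel_subset : ∀ g, asymptoticLength μ ℓ g ≤ R → g ∈ {g | ℓ g ≤ (R + R).toReal} := by
    intro g hg
    refine (ENNReal.ofReal_le_iff_le_toReal (ENNReal.add_ne_top.2 ⟨hR_top, hR_top⟩)).1 ?_
    exact (length_le_asymptoticLength_add hℓ.measurable hR g).trans (by gcongr)
  obtain ⟨g₀, -, hg₀⟩ := (hlsc.lowerSemicontinuousOn _).exists_isMinOn
    ⟨1, sublevel_subset 1 hΦ_one⟩ (hproper (R + R).toReal)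
  have hg₀_le : asymptoticLength μ ℓ g₀ ≤ R := (hg₀ (sublevel_subset 1 hΦ_one)).trans hΦ_one
  have hmin (g : G) : asymptoticLength μ ℓ g₀ ≤ asymptoticLength μ ℓ g := by
    by_cases hg : asymptoticLength μ ℓ g ≤ R
    · exact hg₀ (sublevel_subset g hg)
    · exact hg₀_le.trans (not_le.1 hg).le
  refine ⟨{g | asymptoticLength μ ℓ g = asymptoticLength μ ℓ g₀}, ?_, ⟨g₀, rfl⟩,
    isAEInvariant_argmin hmin (ne_top_of_le_ne_top hR_top hg₀_le)
      (fun g => hlsc.measurable.comp (measurable_mul_const g))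
      (lintegral_asymptoticLength_mul_le hℓ.measurable)⟩
  refine (hproper (R + R).toReal).of_isClosed_subset ?_
    fun g hg => sublevel_subset g (hg.le.trans hg₀_le)
  convert hlsc.isClosed_preimage (asymptoticLength μ ℓ g₀) using 1
  ext g
  exact ⟨fun hg => hg.le, fun hg => le_antisymm hg (hmin g)⟩

end AsymptoticLength

/-! ### Walks hitting a point with positive frequency -/

section Hitting

open scoped ENNReal

lemma exists_tendsto_subseq_of_countable {X Y : Type*} [TopologicalSpace Y] [CompactSpace Y]
    [FirstCountableTopology Y] {F : ℕ → X → Y} {c : X → Y} {D : Set X} (hD : D.Countable)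
    (hF : ∀ x ∉ D, ∀ n, F n x = c x) :
    ∃ (ψ : X → Y) (φ : ℕ → ℕ), StrictMono φ ∧
      ∀ x, Tendsto (fun k => F (φ k) x) atTop (nhds (ψ x)) := by
  classical
  have : Countable D := hD.to_subtype
  obtain ⟨ψ, φ, hφ, hlim⟩ := CompactSpace.tendsto_subseq fun n => fun x : D => F n x
  refine ⟨fun x => if hx : x ∈ D then ψ ⟨x, hx⟩ else c x, φ, hφ, fun x => ?_⟩
  by_cases hx : x ∈ D
  · simp only [hx, dif_pos]
    exact tendsto_pi_nhds.1 hlim ⟨x, hx⟩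
  · simp only [hx, dif_neg, not_false_eq_true, hF x hx, tendsto_const_nhds]

variable {G X : Type*} [Group G] [MulAction G X]

lemma pairwise_disjoint_smul_eq (y : X) :
    Pairwise (Function.onFun Disjoint fun x : X => {h : G | h • x = y}) := fun _ _ hne =>
  Set.disjoint_left.2 fun h hx hx' => hne (MulAction.injective h (Eq.trans hx (Eq.symm hx')))

variable [MeasurableSpace G]

/-- The expected proportion of the times `0, …, N` at which the walk started at `x` visits `y`. -/
def visitFrequency (μ : Measure G) (y : X) (N : ℕ) (x : X) : ℝ≥0∞ :=
  ((N + 1 : ℕ) : ℝ≥0∞)⁻¹ * ∑ n ∈ Finset.range (N + 1), convPow μ n {h | h • x = y}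

variable [MeasurableMul₂ G] {μ : Measure G} [IsProbabilityMeasure μ] {y : X}

lemma sum_visitFrequency_le_one (hy : ∀ x : X, MeasurableSet {h : G | h • x = y}) (N : ℕ)
    (S : Finset X) : ∑ x ∈ S, visitFrequency μ y N x ≤ 1 := by
  simp only [visitFrequency]
  rw [← Finset.mul_sum, Finset.sum_comm]
  calc _ ≤ ((N + 1 : ℕ) : ℝ≥0∞)⁻¹ * ∑ _n ∈ Finset.range (N + 1), 1 := by
        gcongr with n
        exact (sum_measure_le_measure_univ (fun x _ => (hy x).nullMeasurableSet)
          (fun x _ x' _ hne => (pairwise_disjoint_smul_eq y hne).aedisjoint)).trans_eq measure_univ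
    _ = 1 := by
        simp only [Finset.sum_const, Finset.card_range, nsmul_eq_mul, mul_one]
        exact ENNReal.inv_mul_cancel (by simp) (ENNReal.natCast_ne_top _)

lemma visitFrequency_le_one (hy : ∀ x : X, MeasurableSet {h : G | h • x = y}) (N : ℕ) (x : X) :
    visitFrequency μ y N x ≤ 1 := by
  simpa using sum_visitFrequency_le_one (μ := μ) hy N {x}

lemma measurable_convPow_smul_eq (hy : ∀ x : X, MeasurableSet {h : G | h • x = y}) (n : ℕ)
    (x : X) : Measurable fun g : G => convPow μ n {h | h • g • x = y} := by
  simp only [← mul_smul]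
  exact measurable_measure_prodMk_left ((hy x).preimage (measurable_snd.mul measurable_fst))

lemma measurable_visitFrequency_smul (hy : ∀ x : X, MeasurableSet {h : G | h • x = y}) (N : ℕ)
    (x : X) : Measurable fun g : G => visitFrequency μ y N (g • x) :=
  (Finset.measurable_fun_sum _ fun n _ => measurable_convPow_smul_eq hy n x).const_mul _

lemma visitFrequency_le_lintegral_add (hy : ∀ x : X, MeasurableSet {h : G | h • x = y}) (N : ℕ)
    (x : X) : visitFrequency μ y N x ≤
      ∫⁻ g, visitFrequency μ y N (g • x) ∂μ + ((N + 1 : ℕ) : ℝ≥0∞)⁻¹ := by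
  have one_more_step (n : ℕ) :
      ∫⁻ g, convPow μ n {h | h • g • x = y} ∂μ = convPow μ (n + 1) {h | h • x = y} := by
    rw [convPow_add_apply μ n 1 (hy x), convPow_one]
    simp only [← mul_smul, Set.mem_ofPred_eq]
  simp only [visitFrequency]
  rw [lintegral_const_mul _
      (Finset.measurable_fun_sum _ fun n _ => measurable_convPow_smul_eq hy n x),
    lintegral_finsetSum _ fun n _ => measurable_convPow_smul_eq hy n x]
  simp only [one_more_step]
  rw [← mul_add_one]
  gcongr
  rw [Finset.sum_range_succ']
  gcongr
  · exact Nat.le_succ N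
  · exact prob_le_one

lemma exists_subinvariant_of_le_visitFrequency
    (hy : ∀ x : X, MeasurableSet {h : G | h • x = y}) {x₀ : X} {c : ℝ≥0∞}
    (hc : ∀ N, c ≤ visitFrequency μ y N x₀) :
    ∃ ψ : X → ℝ≥0∞, ∑' x, ψ x ≤ 1 ∧ (∀ x, ψ x ≤ ∫⁻ g, ψ (g • x) ∂μ) ∧ c ≤ ψ x₀ := by
  have hD_countable : (⋃ n, {x : X | 0 < convPow μ n {h | h • x = y}}).Countable :=
    Set.countable_iUnion fun n =>
      Measure.countable_meas_pos_of_disjoint_iUnion hy (pairwise_disjoint_smul_eq y)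
  obtain ⟨ψ, φ, hφ, hlim⟩ := exists_tendsto_subseq_of_countable (F := visitFrequency μ y)
    (c := 0) hD_countable fun x hx N => by
      simp only [Set.mem_iUnion, not_exists, Set.mem_ofPred_eq, not_lt, nonpos_iff_eq_zero] at hx
      simp [visitFrequency, hx]
  refine ⟨ψ, ?_, fun x => ?_, ge_of_tendsto' (hlim x₀) fun k => hc _⟩
  · rw [ENNReal.tsum_eq_iSup_sum]
    exact iSup_le fun S => le_of_tendsto' (tendsto_finsetSum S fun x _ => hlim x) fun k =>
      sum_visitFrequency_le_one hy _ S
  · have hlim_lintegral : Tendsto (fun k => ∫⁻ g, visitFrequency μ y (φ k) (g • x) ∂μ) atTop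
        (nhds (∫⁻ g, ψ (g • x) ∂μ)) :=
      tendsto_lintegral_of_dominated_convergence (fun _ => 1)
        (fun k => measurable_visitFrequency_smul hy _ x)
        (fun k => Eventually.of_forall fun g => visitFrequency_le_one hy _ _) (by simp)
        (Eventually.of_forall fun g => hlim _)
    have hlim_error : Tendsto (fun k => ((φ k + 1 : ℕ) : ℝ≥0∞)⁻¹) atTop (nhds 0) :=
      ENNReal.tendsto_inv_nat_nhds_zero.comp ((tendsto_add_atTop_nat 1).comp hφ.tendsto_atTop)
    refine le_of_tendsto_of_tendsto' (hlim x) ?_ fun k => visitFrequency_le_lintegral_add hy _ x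
    simpa only [add_zero] using hlim_lintegral.add hlim_error

lemma exists_finite_isAEInvariant (hy : ∀ x : X, MeasurableSet {h : G | h • x = y}) {x₀ : X}
    {c : ℝ≥0∞} (hc₀ : c ≠ 0) (hc : ∀ N, c ≤ visitFrequency μ y N x₀) :
    ∃ M : Set X, M.Finite ∧ M.Nonempty ∧ (M.ncard : ℝ≥0∞) ≤ c⁻¹ ∧ IsAEInvariant μ M := by
  obtain ⟨ψ, hψ_sum, hψ_sub, hψ_x₀⟩ := exists_subinvariant_of_le_visitFrequency hy hc
  obtain ⟨hfin, hcard⟩ := ENNReal.finset_card_const_le_le_of_tsum_le ENNReal.one_ne_top hψ_sum hc₀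
  obtain ⟨a, ha, ha_max⟩ := Set.exists_max_image _ ψ hfin ⟨x₀, hψ_x₀⟩
  have hmax (x : X) : ψ x ≤ ψ a := by
    by_cases hx : c ≤ ψ x
    · exact ha_max x hx
    · exact (not_le.1 hx).le.trans ha
  have hsub : {x | ψ x = ψ a} ⊆ {x | c ≤ ψ x} := fun x hx => le_of_le_of_eq ha (Eq.symm hx)
  refine ⟨{x | ψ x = ψ a}, hfin.subset hsub, ⟨a, rfl⟩, ?_, isAEInvariant_argmax hmax
    (ne_top_of_le_ne_top ENNReal.one_ne_top ((ENNReal.le_tsum a).trans hψ_sum)) hψ_sub⟩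
  rw [one_div, ← Set.ncard_eq_toFinset_card _ hfin] at hcard
  exact le_trans (by exact_mod_cast Set.ncard_le_ncard hsub hfin) hcard

end Hitting

/-! ### Euclidean geometry of the plane -/

section Plane

lemma enorm2_eq_norm (v : Fin 2 → ℝ) : enorm2 v = ‖WithLp.toLp 2 v‖ := by
  simp [enorm2, EuclideanSpace.norm_eq]

lemma enorm2_nonneg (v : Fin 2 → ℝ) : 0 ≤ enorm2 v :=
  Real.sqrt_nonneg _

lemma enorm2_sq (v : Fin 2 → ℝ) : enorm2 v ^ 2 = v 0 ^ 2 + v 1 ^ 2 :=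
  Real.sq_sqrt (by positivity)

lemma enorm2_pos {v : Fin 2 → ℝ} (hv : v ≠ 0) : 0 < enorm2 v := by
  rw [enorm2_eq_norm, norm_pos_iff]
  exact fun h => hv (congrArg WithLp.ofLp h)

lemma enorm2_smul (c : ℝ) (v : Fin 2 → ℝ) : enorm2 (c • v) = |c| * enorm2 v := by
  rw [enorm2_eq_norm, enorm2_eq_norm, WithLp.toLp_smul, norm_smul, Real.norm_eq_abs]

@[fun_prop]
lemma continuous_enorm2 : Continuous enorm2 := by
  unfold enorm2
  fun_prop

/-- The determinant `det (v, w)`, the area form of the plane. -/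
def wedge (v w : Fin 2 → ℝ) : ℝ := v 0 * w 1 - v 1 * w 0

lemma wedge_smul_left (c : ℝ) (v w : Fin 2 → ℝ) : wedge (c • v) w = c * wedge v w := by
  simp only [wedge, Pi.smul_apply, smul_eq_mul]
  ring

lemma wedge_smul_right (c : ℝ) (v w : Fin 2 → ℝ) : wedge v (c • w) = c * wedge v w := by
  simp only [wedge, Pi.smul_apply, smul_eq_mul]
  ring

lemma abs_wedge_comm (v w : Fin 2 → ℝ) : |wedge v w| = |wedge w v| := by
  rw [← abs_neg]
  congr 1
  simp only [wedge]
  ring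

lemma abs_wedge_le (v w : Fin 2 → ℝ) : |wedge v w| ≤ enorm2 v * enorm2 w := by
  refine abs_le_of_sq_le_sq ?_ (mul_nonneg (enorm2_nonneg v) (enorm2_nonneg w))
  rw [mul_pow, enorm2_sq, enorm2_sq, wedge]
  linarith [sq_nonneg (v 0 * w 0 + v 1 * w 1)]

lemma abs_dotProduct_le (v w : Fin 2 → ℝ) : |v ⬝ᵥ w| ≤ enorm2 v * enorm2 w := by
  refine abs_le_of_sq_le_sq ?_ (mul_nonneg (enorm2_nonneg v) (enorm2_nonneg w))
  rw [mul_pow, enorm2_sq, enorm2_sq, Matrix.vec2_dotProduct]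
  linarith [sq_nonneg (v 0 * w 1 - v 1 * w 0)]

lemma exists_enorm2_eq_wedge_eq (v : Fin 2 → ℝ) :
    ∃ w, enorm2 w = enorm2 v ∧ wedge v w = enorm2 v ^ 2 := by
  refine ⟨![-v 1, v 0], ?_, ?_⟩
  · simp [enorm2, add_comm]
  · rw [enorm2_sq]
    simp only [wedge, Matrix.cons_val_zero, Matrix.cons_val_one]
    ring

lemma enorm2_mul_abs_wedge_le (u v w : Fin 2 → ℝ) :
    enorm2 v * |wedge u w| ≤ |wedge u v| * enorm2 w + enorm2 u * |wedge v w| := by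
  rcases eq_or_ne v 0 with rfl | hv
  · simp [enorm2, wedge]
  have hexpand : enorm2 v ^ 2 * wedge u w = wedge u v * (v ⬝ᵥ w) + (u ⬝ᵥ v) * wedge v w := by
    simp only [enorm2_sq, wedge, Matrix.vec2_dotProduct]
    ring
  refine le_of_mul_le_mul_left ?_ (enorm2_pos hv)
  calc enorm2 v * (enorm2 v * |wedge u w|)
      = |wedge u v * (v ⬝ᵥ w) + (u ⬝ᵥ v) * wedge v w| := by
        rw [← hexpand, abs_mul, abs_of_nonneg (sq_nonneg (enorm2 v))]
        ring
    _ ≤ |wedge u v| * (enorm2 v * enorm2 w) + (enorm2 u * enorm2 v) * |wedge v w| := by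
        refine (abs_add_le _ _).trans ?_
        rw [abs_mul, abs_mul]
        gcongr
        · exact abs_dotProduct_le v w
        · exact abs_dotProduct_le u v
    _ = enorm2 v * (|wedge u v| * enorm2 w + enorm2 u * |wedge v w|) := by ring

lemma mk_eq_mk_iff_wedge_eq_zero {v w : Fin 2 → ℝ} (hv : v ≠ 0) (hw : w ≠ 0) :
    Projectivization.mk ℝ v hv = Projectivization.mk ℝ w hw ↔ wedge v w = 0 := by
  rw [Projectivization.mk_eq_mk_iff']
  constructor
  · rintro ⟨c, rfl⟩
    rw [wedge_smul_left, wedge, mul_comm (w 1), sub_self, mul_zero]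
  · intro h
    have hw_sq : enorm2 w ^ 2 ≠ 0 := (pow_pos (enorm2_pos hw) 2).ne'
    refine ⟨(v ⬝ᵥ w) / enorm2 w ^ 2, ?_⟩
    rw [wedge, sub_eq_zero] at h
    rw [enorm2_sq] at hw_sq ⊢
    ext i
    simp only [Pi.smul_apply, smul_eq_mul, Matrix.vec2_dotProduct, div_mul_eq_mul_div]
    rw [div_eq_iff hw_sq]
    fin_cases i <;> simp only [Fin.zero_eta, Fin.mk_one]
    · linear_combination -w 1 * h
    · linear_combination w 0 * h

end Plane

/-! ### The operator norm on `SL₂(ℝ)` -/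

section OperatorNorm

lemma isClosedEmbedding_coe_SL2 :
    Topology.IsClosedEmbedding fun g : SL2 => (g : Matrix (Fin 2) (Fin 2) ℝ) :=
  @Matrix.SpecialLinearGroup.isClosedEmbedding_val (Fin 2) ℝ _ _ _ _ _ _

instance : IsTopologicalGroup SL2 :=
  @Matrix.SpecialLinearGroup.topologicalGroup (Fin 2) ℝ _ _ _ _ _

instance : BorelSpace SL2 := ⟨rfl⟩

instance : SecondCountableTopology SL2 := by
  have : SecondCountableTopology (Matrix (Fin 2) (Fin 2) ℝ) :=
    inferInstanceAs (SecondCountableTopology (Fin 2 → Fin 2 → ℝ))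
  exact isClosedEmbedding_coe_SL2.isEmbedding.secondCountableTopology

instance : T2Space SL2 := isClosedEmbedding_coe_SL2.isEmbedding.t2Space

lemma continuous_smul_vec (v : Fin 2 → ℝ) : Continuous fun g : SL2 => g • v :=
  isClosedEmbedding_coe_SL2.continuous.matrix_mulVec continuous_const

lemma smul_vec_apply (g : SL2) (v : Fin 2 → ℝ) (i : Fin 2) :
    (g • v) i = g i 0 * v 0 + g i 1 * v 1 :=
  Matrix.vec2_dotProduct _ _

lemma wedge_smul_smul (g : SL2) (v w : Fin 2 → ℝ) : wedge (g • v) (g • w) = wedge v w := by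
  have hdet := g.det_coe
  rw [Matrix.det_fin_two] at hdet
  simp only [wedge, smul_vec_apply]
  linear_combination (v 0 * w 1 - v 1 * w 0) * hdet

lemma enorm2_smul_vec (g : SL2) (v : Fin 2 → ℝ) :
    enorm2 (g • v) = ‖Matrix.toEuclideanCLM (𝕜 := ℝ) (g : Matrix (Fin 2) (Fin 2) ℝ)
      (WithLp.toLp 2 v)‖ :=
  enorm2_eq_norm _

lemma enorm2_smul_le (g : SL2) (v : Fin 2 → ℝ) : enorm2 (g • v) ≤ opNorm g * enorm2 v := by
  rw [enorm2_smul_vec, enorm2_eq_norm]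
  exact ContinuousLinearMap.le_opNorm _ _

lemma exists_enorm2_smul_eq_opNorm (g : SL2) :
    ∃ v, enorm2 v = 1 ∧ enorm2 (g • v) = opNorm g := by
  set A := Matrix.toEuclideanCLM (𝕜 := ℝ) (g : Matrix (Fin 2) (Fin 2) ℝ)
  obtain ⟨v, hv, hmax⟩ := (isCompact_sphere (0 : EuclideanSpace ℝ (Fin 2)) 1).exists_isMaxOn
    (NormedSpace.sphere_nonempty.2 zero_le_one) (f := fun v => ‖A v‖) (by fun_prop)
  have hv_norm : ‖v‖ = 1 := by simpa using hv
  have hv_enorm2 : enorm2 v.ofLp = 1 := by rw [enorm2_eq_norm, WithLp.toLp_ofLp, hv_norm]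
  refine ⟨v.ofLp, hv_enorm2, le_antisymm ?_ ?_⟩
  · simpa [hv_enorm2] using enorm2_smul_le g v.ofLp
  · rw [enorm2_smul_vec]
    exact ContinuousLinearMap.opNorm_le_of_unit_norm (norm_nonneg _) fun x hx =>
      hmax (by simpa using hx)

lemma opNorm_nonneg (g : SL2) : 0 ≤ opNorm g := norm_nonneg _

lemma opNorm_one : opNorm 1 = 1 := by
  simp [opNorm]

lemma opNorm_mul_le (g h : SL2) : opNorm (g * h) ≤ opNorm g * opNorm h := by
  simp only [opNorm, Matrix.SpecialLinearGroup.coe_mul, map_mul]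
  exact norm_mul_le _ _

lemma opNorm_inv_le (g : SL2) : opNorm g⁻¹ ≤ opNorm g := by
  obtain ⟨v, hv, hmax⟩ := exists_enorm2_smul_eq_opNorm g⁻¹
  obtain ⟨w, hw, hwedge⟩ := exists_enorm2_eq_wedge_eq (g⁻¹ • v)
  rw [hmax] at hw hwedge
  have hsq : opNorm g⁻¹ ^ 2 ≤ opNorm g * opNorm g⁻¹ :=
    calc opNorm g⁻¹ ^ 2 = wedge v (g • w) := by
          rw [← hwedge, ← wedge_smul_smul g, smul_inv_smul]
      _ ≤ enorm2 v * enorm2 (g • w) := (le_abs_self _).trans (abs_wedge_le _ _)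
      _ ≤ opNorm g * opNorm g⁻¹ := by simpa [hv, hw] using enorm2_smul_le g w
  rcases (opNorm_nonneg g⁻¹).eq_or_lt with h | h
  · exact h ▸ opNorm_nonneg g
  · exact le_of_mul_le_mul_right (by rwa [← sq]) h

lemma opNorm_inv (g : SL2) : opNorm g⁻¹ = opNorm g :=
  (opNorm_inv_le g).antisymm (by simpa only [inv_inv] using opNorm_inv_le g⁻¹)

lemma one_le_opNorm (g : SL2) : 1 ≤ opNorm g := by
  have h := opNorm_mul_le g g⁻¹
  rw [mul_inv_cancel, opNorm_one, opNorm_inv, ← sq] at h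
  exact (one_le_sq_iff₀ (opNorm_nonneg g)).1 h

lemma opNorm_pos (g : SL2) : 0 < opNorm g := one_pos.trans_le (one_le_opNorm g)

lemma enorm2_le_opNorm_mul (g : SL2) (v : Fin 2 → ℝ) : enorm2 v ≤ opNorm g * enorm2 (g • v) := by
  simpa only [opNorm_inv, inv_smul_smul] using enorm2_smul_le g⁻¹ (g • v)

lemma abs_coe_apply_le_opNorm (g : SL2) (i j : Fin 2) : |g i j| ≤ opNorm g := by
  set e : Fin 2 → ℝ := Pi.single j 1
  have hcol : g i j = (g • e) i := by
    fin_cases j <;> simp [smul_vec_apply, e]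
  calc |g i j| ≤ enorm2 (g • e) := by
        rw [hcol, enorm2_eq_norm, ← Real.norm_eq_abs]
        exact PiLp.norm_apply_le (WithLp.toLp 2 (g • e)) i
    _ ≤ opNorm g * enorm2 e := enorm2_smul_le _ _
    _ = opNorm g := by simp [enorm2_eq_norm, e]

lemma continuous_opNorm : Continuous opNorm := by
  have hlin : Continuous fun A : Matrix (Fin 2) (Fin 2) ℝ => Matrix.toEuclideanCLM (𝕜 := ℝ) A :=
    LinearMap.continuous_of_finiteDimensional
      (Matrix.toEuclideanCLM (𝕜 := ℝ) (n := Fin 2)).toAlgEquiv.toLinearMap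
  exact (hlin.comp isClosedEmbedding_coe_SL2.continuous).norm

lemma isCompact_opNorm_le (R : ℝ) : IsCompact {g : SL2 | opNorm g ≤ R} := by
  have hbox : IsCompact (Set.univ.pi fun _ => Set.univ.pi fun _ => Set.Icc (-R) R :
      Set (Matrix (Fin 2) (Fin 2) ℝ)) :=
    isCompact_univ_pi fun _ => isCompact_univ_pi fun _ => isCompact_Icc
  exact (isClosedEmbedding_coe_SL2.isCompact_preimage hbox).of_isClosed_subset
    (isClosed_le continuous_opNorm continuous_const)
    fun g hg i _ j _ => abs_le.1 ((abs_coe_apply_le_opNorm g i j).trans hg)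

/-- The Cartan projection as a length function on `SL₂(ℝ)`. -/
def kappaSeminorm : GroupSeminorm SL2 where
  toFun := kappa
  map_one' := by rw [kappa, opNorm_one, Real.log_one]
  mul_le' g h := by
    rw [kappa, kappa, kappa, ← Real.log_mul (opNorm_pos g).ne' (opNorm_pos h).ne']
    exact Real.log_le_log (opNorm_pos _) (opNorm_mul_le g h)
  inv' g := by rw [kappa, opNorm_inv, kappa]

lemma exp_kappa (g : SL2) : Real.exp (kappa g) = opNorm g :=
  Real.exp_log (opNorm_pos g)

lemma continuous_kappa : Continuous kappa :=
  continuous_opNorm.log fun g => (opNorm_pos g).ne'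

lemma isCompact_kappa_le (R : ℝ) : IsCompact {g : SL2 | kappa g ≤ R} := by
  simpa only [kappa, Real.log_le_iff_le_exp (opNorm_pos _)] using isCompact_opNorm_le (Real.exp R)

end OperatorNorm

/-! ### The projective line -/

section ProjectiveLine

open Projectivization

lemma cocycle_mk (g : SL2) {v : Fin 2 → ℝ} (hv : v ≠ 0) :
    cocycle g (mk ℝ v hv) = Real.log (enorm2 (g • v) / enorm2 v) := by
  obtain ⟨c, hc⟩ := exists_smul_eq_mk_rep ℝ v hv
  change Real.log (enorm2 (g • (mk ℝ v hv).rep) / _) = _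
  rw [← hc, Units.smul_def, smul_comm, enorm2_smul, enorm2_smul,
    mul_div_mul_left _ _ (abs_pos.2 c.ne_zero).ne']

lemma exp_cocycle_mk (g : SL2) {v : Fin 2 → ℝ} (hv : v ≠ 0) :
    Real.exp (cocycle g (mk ℝ v hv)) = enorm2 (g • v) / enorm2 v := by
  rw [cocycle_mk, Real.exp_log]
  exact div_pos (enorm2_pos ((smul_ne_zero_iff_ne g).2 hv)) (enorm2_pos hv)

lemma projDist_mk {v w : Fin 2 → ℝ} (hv : v ≠ 0) (hw : w ≠ 0) :
    projDist (mk ℝ v hv) (mk ℝ w hw) = |wedge v w| / (enorm2 v * enorm2 w) := by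
  obtain ⟨c, hc⟩ := exists_smul_eq_mk_rep ℝ v hv
  obtain ⟨d, hd⟩ := exists_smul_eq_mk_rep ℝ w hw
  have hc₀ := (abs_pos.2 c.ne_zero).ne'
  have hd₀ := (abs_pos.2 d.ne_zero).ne'
  change |wedge (mk ℝ v hv).rep (mk ℝ w hw).rep| / _ = _
  rw [← hc, ← hd, Units.smul_def, Units.smul_def, wedge_smul_left, wedge_smul_right, enorm2_smul,
    enorm2_smul, abs_mul, abs_mul, mul_mul_mul_comm, ← mul_assoc,
    mul_div_mul_left _ _ (mul_ne_zero hc₀ hd₀)]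

lemma projDist_nonneg (x y : PX) : 0 ≤ projDist x y :=
  div_nonneg (abs_nonneg _) (mul_nonneg (enorm2_nonneg _) (enorm2_nonneg _))

lemma projDist_comm (x y : PX) : projDist x y = projDist y x := by
  induction x using Projectivization.ind with | h v hv
  induction y using Projectivization.ind with | h w hw
  rw [projDist_mk hv hw, projDist_mk hw hv, abs_wedge_comm, mul_comm (enorm2 v)]

lemma projDist_eq_zero {x y : PX} : projDist x y = 0 ↔ x = y := by
  induction x using Projectivization.ind with | h v hv
  induction y using Projectivization.ind with | h w hw
  rw [projDist_mk hv hw, div_eq_zero_iff, abs_eq_zero, mk_eq_mk_iff_wedge_eq_zero hv hw,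
    or_iff_left (mul_pos (enorm2_pos hv) (enorm2_pos hw)).ne']

lemma projDist_triangle (x y z : PX) : projDist x z ≤ projDist x y + projDist y z := by
  induction x using Projectivization.ind with | h u hu
  induction y using Projectivization.ind with | h v hv
  induction z using Projectivization.ind with | h w hw
  have hu₀ := enorm2_pos hu
  have hv₀ := enorm2_pos hv
  have hw₀ := enorm2_pos hw
  rw [projDist_mk hu hw, projDist_mk hu hv, projDist_mk hv hw]
  calc |wedge u w| / (enorm2 u * enorm2 w)
      = enorm2 v * |wedge u w| / (enorm2 u * enorm2 v * enorm2 w) := by field_simp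
    _ ≤ (|wedge u v| * enorm2 w + enorm2 u * |wedge v w|) / (enorm2 u * enorm2 v * enorm2 w) := by
        gcongr
        exact enorm2_mul_abs_wedge_le u v w
    _ = |wedge u v| / (enorm2 u * enorm2 v) + |wedge v w| / (enorm2 v * enorm2 w) := by field_simp

lemma projDist_smul_smul_le (g : SL2) (x y : PX) :
    projDist (g • x) (g • y) ≤ opNorm g ^ 2 * projDist x y := by
  induction x using Projectivization.ind with | h v hv
  induction y using Projectivization.ind with | h w hw
  have hgv₀ := enorm2_pos ((smul_ne_zero_iff_ne g).2 hv)
  have hgw₀ := enorm2_pos ((smul_ne_zero_iff_ne g).2 hw)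
  have hv₀ := enorm2_pos hv
  have hw₀ := enorm2_pos hw
  rw [smul_mk, smul_mk, projDist_mk, projDist_mk, wedge_smul_smul, mul_div_assoc',
    div_le_div_iff₀ (by positivity) (by positivity), mul_comm (opNorm g ^ 2), mul_assoc]
  refine mul_le_mul_of_nonneg_left ?_ (abs_nonneg _)
  calc enorm2 v * enorm2 w
      ≤ (opNorm g * enorm2 (g • v)) * (opNorm g * enorm2 (g • w)) :=
        mul_le_mul (enorm2_le_opNorm_mul g v) (enorm2_le_opNorm_mul g w) hw₀.le
          (mul_nonneg (opNorm_nonneg g) hgv₀.le)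
    _ = opNorm g ^ 2 * (enorm2 (g • v) * enorm2 (g • w)) := by ring

lemma exists_opNorm_mul_projDist_le (g : SL2) :
    ∃ y, ∀ x, opNorm g * projDist x y ≤ Real.exp (cocycle g x) := by
  obtain ⟨u, hu, hmax⟩ := exists_enorm2_smul_eq_opNorm g⁻¹
  rw [opNorm_inv] at hmax
  have hu₀ : u ≠ 0 := by
    rintro rfl
    simp [enorm2] at hu
  refine ⟨mk ℝ (g⁻¹ • u) ((smul_ne_zero_iff_ne _).2 hu₀), fun x => ?_⟩
  induction x using Projectivization.ind with | h v hv
  have hg₀ := opNorm_pos g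
  have hv₀ := enorm2_pos hv
  rw [projDist_mk, exp_cocycle_mk, hmax]
  calc opNorm g * (|wedge v (g⁻¹ • u)| / (enorm2 v * opNorm g))
      = |wedge (g • v) u| / enorm2 v := by
        rw [← wedge_smul_smul g, smul_inv_smul]
        field_simp
    _ ≤ enorm2 (g • v) / enorm2 v := by
        gcongr
        simpa only [hu, mul_one] using abs_wedge_le (g • v) u

lemma exists_kappa_add_log_le_cocycle (g : SL2) :
    ∃ y, ∀ x, ∀ η > 0, η ≤ projDist x y → kappa g + Real.log η ≤ cocycle g x := by
  obtain ⟨y, hy⟩ := exists_opNorm_mul_projDist_le g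
  refine ⟨y, fun x η hη hx => ?_⟩
  rw [kappa, ← Real.log_mul (opNorm_pos g).ne' hη.ne', Real.log_le_iff_le_exp
    (mul_pos (opNorm_pos g) hη)]
  exact (mul_le_mul_of_nonneg_left hx (opNorm_nonneg g)).trans (hy x)

lemma exists_cocycle_eq_kappa (g : SL2) : ∃ x, cocycle g x = kappa g := by
  obtain ⟨v, hv, hmax⟩ := exists_enorm2_smul_eq_opNorm g
  have hv₀ : v ≠ 0 := by
    rintro rfl
    simp [enorm2] at hv
  exact ⟨mk ℝ v hv₀, by rw [cocycle_mk, hmax, hv, div_one, kappa]⟩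

lemma abs_cocycle_le_kappa (g : SL2) (x : PX) : |cocycle g x| ≤ kappa g := by
  induction x using Projectivization.ind with | h v hv
  have hv₀ := enorm2_pos hv
  rw [abs_le, ← Real.exp_le_exp, ← Real.exp_le_exp (y := kappa g), exp_cocycle_mk, Real.exp_neg,
    exp_kappa, inv_le_iff_one_le_mul₀' (opNorm_pos g), mul_div_assoc', one_le_div hv₀,
    div_le_iff₀ hv₀]
  exact ⟨enorm2_le_opNorm_mul g v, enorm2_smul_le g v⟩

lemma continuous_cocycle (x : PX) : Continuous fun g => cocycle g x := by
  induction x using Projectivization.ind with | h v hv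
  simp only [cocycle_mk]
  exact ((continuous_enorm2.comp (continuous_smul_vec v)).div_const _).log fun g =>
    (div_pos (enorm2_pos ((smul_ne_zero_iff_ne g).2 hv)) (enorm2_pos hv)).ne'

lemma isLengthCocycle_cocycle : IsLengthCocycle kappaSeminorm cocycle where
  map_mul g h x := by
    induction x using Projectivization.ind with | h v hv
    have hhv₀ := enorm2_pos ((smul_ne_zero_iff_ne h).2 hv)
    have hghv₀ := enorm2_pos ((smul_ne_zero_iff_ne (g * h)).2 hv)
    have hv₀ := enorm2_pos hv
    rw [smul_mk, cocycle_mk, cocycle_mk, cocycle_mk, ← mul_smul,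
      ← Real.log_mul (by positivity) (by positivity), div_mul_div_cancel₀ hhv₀.ne']
  measurable x := (continuous_cocycle x).measurable
  abs_le_length := abs_cocycle_le_kappa

lemma continuous_wedge : Continuous fun p : (Fin 2 → ℝ) × (Fin 2 → ℝ) => wedge p.1 p.2 := by
  unfold wedge
  fun_prop

lemma continuous_mk : Continuous (mk' ℝ : { v : Fin 2 → ℝ // v ≠ 0 } → PX) :=
  continuous_quotient_mk'

lemma continuous_projDist_left (y : PX) : Continuous fun x => projDist x y := by
  induction y using Projectivization.ind with | h w hw
  refine isQuotientMap_quotient_mk'.continuous_iff.2 ?_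
  have hmk : Continuous fun v : { v : Fin 2 → ℝ // v ≠ 0 } =>
      |wedge v w| / (enorm2 v * enorm2 w) :=
    (continuous_wedge.comp (continuous_subtype_val.prodMk continuous_const)).abs.div
      (by fun_prop) fun v => (mul_pos (enorm2_pos v.2) (enorm2_pos hw)).ne'
  exact hmk.congr fun v => (projDist_mk v.2 hw).symm

lemma continuous_projDist_smul (x y : PX) : Continuous fun g : SL2 => projDist (g • x) y := by
  induction x using Projectivization.ind with | h v hv
  refine (continuous_projDist_left y).comp (continuous_mk.comp (Y := { v : Fin 2 → ℝ // v ≠ 0 })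
    (f := fun g : SL2 => ⟨g • v, (smul_ne_zero_iff_ne g).2 hv⟩) ?_)
  exact (continuous_smul_vec v).subtype_mk _

lemma isClosed_smul_eq (x y : PX) : IsClosed {g : SL2 | g • x = y} := by
  simpa only [projDist_eq_zero] using
    isClosed_eq (continuous_projDist_smul x y) (continuous_const (y := 0))

instance : CompactSpace PX := by
  have hne (v : Metric.sphere (0 : EuclideanSpace ℝ (Fin 2)) 1) : v.1.ofLp ≠ 0 := fun h =>
    ne_zero_of_mem_unit_sphere v (congrArg (WithLp.toLp 2) h)
  have hcont : Continuous fun v : Metric.sphere (0 : EuclideanSpace ℝ (Fin 2)) 1 =>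
      (⟨v.1.ofLp, hne v⟩ : { v : Fin 2 → ℝ // v ≠ 0 }) :=
    Continuous.subtype_mk (by fun_prop) _
  refine Function.Surjective.compactSpace (continuous_mk.comp hcont) fun x => ?_
  induction x using Projectivization.ind with | h v hv
  have hv₀ := enorm2_pos hv
  refine ⟨⟨WithLp.toLp 2 ((enorm2 v)⁻¹ • v), ?_⟩,
    (mk_eq_mk_iff' ℝ _ _ _ _).2 ⟨(enorm2 v)⁻¹, rfl⟩⟩
  rw [mem_sphere_zero_iff_norm, ← enorm2_eq_norm, enorm2_smul, abs_of_pos (inv_pos.2 hv₀),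
    inv_mul_cancel₀ hv₀.ne']

end ProjectiveLine

/-! ### Solvable subgroups of `SL₂(ℝ)` -/

section Solvable

open Matrix Projectivization
open scoped commutatorElement Pointwise

lemma isSolvable_of_commutator_le {G : Type*} [Group G] {Γ H : Subgroup G} [Group.IsSolvable H]
    (h : ⁅Γ, Γ⁆ ≤ H) : Group.IsSolvable Γ := by
  have hcomm : Group.IsSolvable ↥⁅Γ, Γ⁆ :=
    Group.isSolvable_of_isSolvable_injective (Subgroup.inclusion_injective h)
  refine Group.isSolvable_of_ker_le_range (Subgroup.inclusion (Subgroup.commutator_le_self Γ))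
    (Abelianization.of (G := Γ)) ?_
  rw [Abelianization.ker_of, Subgroup.inclusion_range, Subgroup.subgroupOf,
    ← Subgroup.map_le_iff_le_comap, Subgroup.map_subtype_commutator]

lemma commutatorElement_smul_smul_eq_self {G X : Type*} [Group G] [MulAction G X] {g h : G}
    {x : X} (hgh : (g * h) • x = (h * g) • x) : ⁅g, h⁆ • (h * g) • x = (h * g) • x := by
  rw [← mul_smul, commutatorElement_def, ← hgh]
  congr 1
  group

lemma commute_of_natCard_le_two {X : Type*} [Finite X] (hX : Nat.card X ≤ 2)
    (e f : Equiv.Perm X) : Commute e f := by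
  have hdvd : Nat.card (Equiv.Perm X) ∣ 2 := by
    rw [Nat.card_perm]
    exact Nat.factorial_dvd_factorial hX
  have := isCyclic_of_card_dvd_prime hdvd
  exact mul_comm' e f

lemma exists_coe_eq_of_smul_eq_self {g : SL2} {v : Fin 2 → ℝ} (hv : v ≠ 0) (hg : g • v = v) :
    ∃ c : ℝ, (g : Matrix (Fin 2) (Fin 2) ℝ) = 1 + c • vecMulVec v ![-v 1, v 0] := by
  have hdet := g.det_coe
  rw [det_fin_two] at hdet
  have h₀ : g 0 0 * v 0 + g 0 1 * v 1 = v 0 := by rw [← smul_vec_apply, hg]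
  have h₁ : g 1 0 * v 0 + g 1 1 * v 1 = v 1 := by rw [← smul_vec_apply, hg]
  have hv₀ : 0 < v 0 ^ 2 + v 1 ^ 2 := enorm2_sq v ▸ pow_pos (enorm2_pos hv) 2
  have htrace : g 0 0 + g 1 1 = 2 := by
    refine mul_left_cancel₀ hv₀.ne' ?_
    linear_combination (v 0 ^ 2 + v 1 ^ 2) * hdet + (v 0 * (1 - g 1 1) + v 1 * g 1 0) * h₀
      + (v 1 * (1 - g 0 0) + v 0 * g 0 1) * h₁
  refine ⟨(g 0 1 - g 1 0) / (v 0 ^ 2 + v 1 ^ 2), ?_⟩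
  refine Matrix.ext (Fin.forall_fin_two.2
    ⟨Fin.forall_fin_two.2 ⟨?_, ?_⟩, Fin.forall_fin_two.2 ⟨?_, ?_⟩⟩) <;>
  simp only [Matrix.add_apply, one_apply_eq, one_apply_ne zero_ne_one, one_apply_ne one_ne_zero,
    Matrix.smul_apply, vecMulVec_apply, cons_val_zero, cons_val_one, smul_eq_mul] <;>
  field_simp
  · linear_combination v 0 * h₀ - v 1 * h₁ + v 1 ^ 2 * htrace
  · linear_combination v 1 * h₀ + v 0 * h₁ - v 0 * v 1 * htrace
  · linear_combination v 1 * h₀ + v 0 * h₁ - v 0 * v 1 * htrace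
  · linear_combination -v 0 * h₀ + v 1 * h₁ + v 0 ^ 2 * htrace

lemma isSolvable_stabilizer_vec {v : Fin 2 → ℝ} (hv : v ≠ 0) :
    Group.IsSolvable (MulAction.stabilizer SL2 v) := by
  refine Group.isSolvable_of_comm fun g h => Subtype.ext ?_
  obtain ⟨c, hc⟩ := exists_coe_eq_of_smul_eq_self hv g.2
  obtain ⟨d, hd⟩ := exists_coe_eq_of_smul_eq_self hv h.2
  apply Subtype.ext
  rw [Subgroup.coe_mul, Subgroup.coe_mul, Matrix.SpecialLinearGroup.coe_mul,
    Matrix.SpecialLinearGroup.coe_mul, hc, hd]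
  exact (Commute.one_left _).add_left ((Commute.one_right _).add_right
    (((Commute.refl _).smul_right d).smul_left c))

lemma exists_smul_eq_smul_of_mem_stabilizer_mk {g : SL2} {v : Fin 2 → ℝ} (hv : v ≠ 0)
    (hg : g ∈ MulAction.stabilizer SL2 (mk ℝ v hv)) : ∃ c : ℝˣ, g • v = c • v := by
  rw [MulAction.mem_stabilizer_iff, smul_mk, mk_eq_mk_iff] at hg
  exact hg.imp fun _ => Eq.symm

lemma isSolvable_stabilizer_mk {v : Fin 2 → ℝ} (hv : v ≠ 0) :
    Group.IsSolvable (MulAction.stabilizer SL2 (mk ℝ v hv)) := by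
  have := isSolvable_stabilizer_vec hv
  refine isSolvable_of_commutator_le (H := MulAction.stabilizer SL2 v) ?_
  rw [Subgroup.commutator_le]
  intro g hg h hh
  obtain ⟨c, hc⟩ := exists_smul_eq_smul_of_mem_stabilizer_mk hv hg
  obtain ⟨d, hd⟩ := exists_smul_eq_smul_of_mem_stabilizer_mk hv hh
  have hgh : (g * h) • v = (h * g) • v := by
    simp only [mul_smul, hc, hd, smul_comm g d, smul_comm h c, smul_comm c d]
  have hhg : (h * g) • v = (c * d) • v := by
    simp only [mul_smul, hc, hd, smul_comm h c]
  have hfix := commutatorElement_smul_smul_eq_self hgh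
  rw [hhg, smul_comm] at hfix
  exact smul_left_cancel _ hfix

lemma isSolvable_stabilizer_of_ncard_le_two {M : Set PX} (hfin : M.Finite) (hne : M.Nonempty)
    (hcard : M.ncard ≤ 2) : Group.IsSolvable (MulAction.stabilizer SL2 M) := by
  obtain ⟨x, hx⟩ := hne
  have : Finite M := hfin
  have hsolv : Group.IsSolvable (MulAction.stabilizer SL2 x) := by
    induction x using Projectivization.ind with | h v hv
    exact isSolvable_stabilizer_mk hv
  refine isSolvable_of_commutator_le (H := MulAction.stabilizer SL2 x) ?_
  rw [Subgroup.commutator_le]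
  intro g hg h hh
  set φ := MulAction.toPermHom (MulAction.stabilizer SL2 M) M
  have hcomm : φ ⁅(⟨g, hg⟩ : MulAction.stabilizer SL2 M), ⟨h, hh⟩⁆ = 1 := by
    rw [map_commutatorElement, commutatorElement_eq_one_iff_commute]
    exact commute_of_natCard_le_two hcard _ _
  exact congrArg Subtype.val (Equiv.Perm.congr_fun hcomm ⟨x, hx⟩)

lemma isSolvable_closure_of_ncard_le_two {s : Set SL2} {M : Set PX} (hfin : M.Finite)
    (hne : M.Nonempty) (hcard : M.ncard ≤ 2) (hs : ∀ g ∈ s, ∀ x ∈ M, g • x ∈ M) :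
    Group.IsSolvable (Subgroup.closure s) := by
  have := isSolvable_stabilizer_of_ncard_le_two hfin hne hcard
  refine Group.isSolvable_of_isSolvable_injective (Subgroup.inclusion_injective
    ((Subgroup.closure_le (MulAction.stabilizer SL2 M)).2 fun g hg => ?_))
  exact (MulAction.mem_stabilizer_set' hfin).2 (hs g hg)

lemma nonpos_of_forall_two_mul_le_comp {X : Type*} {S : Set X} {f : X → ℝ} {d : X → X} {B : ℝ}
    (hB : ∀ x ∈ S, f x ≤ B) (hd : Set.MapsTo d S S) (hf : ∀ x ∈ S, 2 * f x ≤ f (d x)) {x : X}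
    (hx : x ∈ S) : f x ≤ 0 := by
  have hbdd : BddAbove (f '' S) := ⟨B, Set.forall_mem_image.2 hB⟩
  have hhalf : sSup (f '' S) ≤ sSup (f '' S) / 2 :=
    csSup_le (Set.image_nonempty.2 ⟨x, hx⟩) <| Set.forall_mem_image.2 fun y hy => by
      linarith [hf y hy, le_csSup hbdd (Set.mem_image_of_mem f (hd hy))]
  linarith [le_csSup hbdd (Set.mem_image_of_mem f hx)]

lemma coe_mul_self_eq (g : SL2) : ((g * g : SL2) : Matrix (Fin 2) (Fin 2) ℝ) =
    trace (g : Matrix (Fin 2) (Fin 2) ℝ) • (g : Matrix (Fin 2) (Fin 2) ℝ) - 1 := by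
  have hcayley := aeval_self_charpoly (g : Matrix (Fin 2) (Fin 2) ℝ)
  simp only [charpoly_fin_two, g.det_coe, map_add, map_sub, map_mul, map_pow, map_one,
    Polynomial.aeval_X, Polynomial.aeval_C, ← Algebra.smul_def] at hcayley
  rw [Matrix.SpecialLinearGroup.coe_mul, ← sub_eq_zero, ← hcayley, sq]
  abel

lemma two_le_trace_commutator {g : SL2} (hg : |trace (g : Matrix (Fin 2) (Fin 2) ℝ)| ≤ 2)
    (h : SL2) : 2 ≤ trace ((⁅g, h⁆ : SL2) : Matrix (Fin 2) (Fin 2) ℝ) := by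
  have hdetg := g.det_coe
  have hdeth := h.det_coe
  rw [det_fin_two] at hdetg hdeth
  -- `!![p, q; r, -p]` is `g * h - h * g`, so that `tr ⁅g, h⁆ = 2 - det (g * h - h * g)`.
  set d := g 0 0 - g 1 1 with hd
  set p := g 0 1 * h 1 0 - h 0 1 * g 1 0 with hp
  set q := d * h 0 1 - g 0 1 * (h 0 0 - h 1 1) with hq
  set r := g 1 0 * (h 0 0 - h 1 1) - d * h 1 0 with hr
  have htrace : trace ((⁅g, h⁆ : SL2) : Matrix (Fin 2) (Fin 2) ℝ) = 2 + (p ^ 2 + q * r) := by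
    rw [commutatorElement_def, Matrix.SpecialLinearGroup.coe_mul, Matrix.SpecialLinearGroup.coe_mul,
      Matrix.SpecialLinearGroup.coe_mul, Matrix.SpecialLinearGroup.coe_inv,
      Matrix.SpecialLinearGroup.coe_inv,
      adjugate_fin_two, adjugate_fin_two, trace_fin_two]
    simp only [mul_apply, Fin.sum_univ_two, of_apply, cons_val_zero, cons_val_one]
    rw [hp, hq, hr, hd]
    linear_combination (2 * (h 0 0 * h 1 1 - h 0 1 * h 1 0)) * hdetg + 2 * hdeth
  have hdisc : d ^ 2 + 4 * (g 0 1 * g 1 0) ≤ 0 := by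
    rw [trace_fin_two] at hg
    have := sq_le_sq' (abs_le.1 hg).1 (abs_le.1 hg).2
    linear_combination this - 4 * hdetg
  have hform : -(4 * (g 0 1 * g 1 0)) * (p ^ 2 + q * r) =
      -(d ^ 2 + 4 * (g 0 1 * g 1 0)) * p ^ 2 + (q * g 1 0 - r * g 0 1) ^ 2 := by
    rw [hp, hq, hr]
    ring
  rw [htrace, le_add_iff_nonneg_right]
  rcases (show g 0 1 * g 1 0 ≤ 0 by linarith [sq_nonneg d]).lt_or_eq with hneg | hzero
  · refine le_of_mul_le_mul_left ?_ (show 0 < -(4 * (g 0 1 * g 1 0)) by linarith)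
    rw [hform, mul_zero]
    exact add_nonneg (mul_nonneg (by linarith) (sq_nonneg p)) (sq_nonneg _)
  · have hd₀ : d = 0 := by
      rw [hzero] at hdisc
      exact pow_eq_zero_iff two_ne_zero |>.1 (le_antisymm (by linarith) (sq_nonneg d))
    have hqr : q * r = 0 := by
      rw [hq, hr, hd₀]
      linear_combination -(h 0 0 - h 1 1) ^ 2 * hzero
    rw [hqr, add_zero]
    exact sq_nonneg p

section Bounded

variable {Γ : Subgroup SL2} {R : ℝ} {g : SL2}

lemma abs_trace_le_two_of_opNorm_le (hR : ∀ g ∈ Γ, opNorm g ≤ R) (hg : g ∈ Γ) :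
    |trace (g : Matrix (Fin 2) (Fin 2) ℝ)| ≤ 2 := by
  by_contra! hlt
  have htrace (h : SL2) : trace ((h * h : SL2) : Matrix (Fin 2) (Fin 2) ℝ) =
      |trace (h : Matrix (Fin 2) (Fin 2) ℝ)| ^ 2 - 2 := by
    rw [coe_mul_self_eq, trace_sub, trace_smul, trace_one, smul_eq_mul, sq_abs, sq]
    norm_num
  refine (sub_pos.2 hlt).not_ge (nonpos_of_forall_two_mul_le_comp (B := 2 * R - 2)
    (S := {h | h ∈ Γ ∧ 2 ≤ |trace (h : Matrix (Fin 2) (Fin 2) ℝ)|}) (d := fun h => h * h)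
    (f := fun h => |trace (h : Matrix (Fin 2) (Fin 2) ℝ)| - 2) ?_ ?_ ?_ ⟨hg, hlt.le⟩)
  · rintro h ⟨hh, -⟩
    rw [trace_fin_two]
    linarith [abs_add_le (h 0 0) (h 1 1), abs_coe_apply_le_opNorm h 0 0,
      abs_coe_apply_le_opNorm h 1 1, hR h hh]
  · rintro h ⟨hh, hh₂⟩
    refine ⟨mul_mem hh hh, le_trans ?_ (le_abs_self _)⟩
    rw [htrace]
    nlinarith
  · rintro h ⟨-, hh₂⟩
    refine le_trans ?_ (sub_le_sub_right (le_abs_self _) 2)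
    rw [htrace]
    nlinarith

lemma eq_one_of_trace_eq_two_of_opNorm_le (hR : ∀ g ∈ Γ, opNorm g ≤ R) (hg : g ∈ Γ)
    (htrace : trace (g : Matrix (Fin 2) (Fin 2) ℝ) = 2) : g = 1 := by
  refine Matrix.SpecialLinearGroup.ext g 1 fun i j => sub_eq_zero.1 (abs_nonpos_iff.1 ?_)
  refine nonpos_of_forall_two_mul_le_comp (B := R + |(1 : SL2) i j|)
    (S := {h | h ∈ Γ ∧ trace (h : Matrix (Fin 2) (Fin 2) ℝ) = 2}) (d := fun h => h * h)
    (f := fun h => |h i j - (1 : SL2) i j|) ?_ ?_ ?_ ⟨hg, htrace⟩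
  · rintro h ⟨hh, -⟩
    linarith [abs_sub (h i j) ((1 : SL2) i j), abs_coe_apply_le_opNorm h i j, hR h hh]
  · rintro h ⟨hh, hh₂⟩
    refine ⟨mul_mem hh hh, ?_⟩
    rw [coe_mul_self_eq, trace_sub, trace_smul, hh₂, trace_one]
    norm_num
  · rintro h ⟨-, hh₂⟩
    have hdouble : (h * h) i j - (1 : SL2) i j = 2 * (h i j - (1 : SL2) i j) := by
      rw [coe_mul_self_eq, hh₂, Matrix.SpecialLinearGroup.coe_one, Matrix.sub_apply,
        Matrix.smul_apply, smul_eq_mul]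
      ring
    rw [hdouble, abs_mul, abs_two]

lemma isSolvable_of_opNorm_le (hR : ∀ g ∈ Γ, opNorm g ≤ R) : Group.IsSolvable Γ := by
  refine Group.isSolvable_of_comm fun g h => Subtype.ext ?_
  have hmem : ⁅(g : SL2), (h : SL2)⁆ ∈ Γ := (⁅g, h⁆).2
  refine commutatorElement_eq_one_iff_mul_comm.1 (eq_one_of_trace_eq_two_of_opNorm_le hR hmem ?_)
  exact ((abs_le.1 (abs_trace_le_two_of_opNorm_le hR hmem)).2).antisymm
    (two_le_trace_commutator (abs_trace_le_two_of_opNorm_le hR g.2) h)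

end Bounded

lemma measSupp_subset_of_ae_mem {μ : Measure SL2} {A : Set SL2} (hA : IsClosed A)
    (h : ∀ᵐ g ∂μ, g ∈ A) : measSupp μ ⊆ A := by
  intro g hg
  by_contra hgA
  exact (hg Aᶜ hA.isOpen_compl hgA).ne' h

end Solvable

/-! ### Random walks on `SL₂(ℝ)` -/

section RandomWalk

open scoped ENNReal

lemma sum_convPow_smul_mem_le {G X : Type*} [Monoid G] [MeasurableSpace G] [MeasurableMul₂ G]
    [MulAction G X] {μ : Measure G} [IsProbabilityMeasure μ] {B : Set X}
    (hB : ∀ x, MeasurableSet {h : G | h • x ∈ B}) {θ : ℝ≥0∞} {L : ℕ}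
    (hθ : ∀ x, ∃ N, 0 < N ∧ N ≤ L ∧
      ∑ n ∈ Finset.range N, convPow μ n {h | h • x ∈ B} ≤ θ * N) (M : ℕ) (x : X) :
    ∑ n ∈ Finset.range M, convPow μ n {h | h • x ∈ B} ≤ θ * M + L := by
  induction M using Nat.strong_induction_on generalizing x with
  | _ M ih =>
    obtain hML | hLM := le_or_gt M L
    · calc ∑ n ∈ Finset.range M, convPow μ n {h | h • x ∈ B}
          ≤ ∑ _n ∈ Finset.range M, (1 : ℝ≥0∞) := Finset.sum_le_sum fun n _ => prob_le_one
        _ = M := by simp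
        _ ≤ θ * M + L := (Nat.cast_le.2 hML).trans le_add_self
    · obtain ⟨N, hN, hNL, hle⟩ := hθ x
      obtain ⟨M, rfl⟩ := Nat.exists_eq_add_of_le (hNL.trans hLM.le)
      have hshift : ∑ n ∈ Finset.range M, convPow μ (N + n) {h | h • x ∈ B} =
          ∫⁻ g, ∑ n ∈ Finset.range M, convPow μ n {h | h • g • x ∈ B} ∂convPow μ N := by
        have hmeas (n : ℕ) : Measurable fun g : G => convPow μ n {h | h • g • x ∈ B} := by
          simp only [← mul_smul]
          exact measurable_measure_prodMk_left
            ((hB x).preimage (measurable_snd.mul measurable_fst))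
        rw [lintegral_finsetSum _ fun n _ => hmeas n]
        refine Finset.sum_congr rfl fun n _ => ?_
        simp only [add_comm N n, convPow_add_apply μ n N (hB x), Set.mem_ofPred_eq, mul_smul]
      calc ∑ n ∈ Finset.range (N + M), convPow μ n {h | h • x ∈ B}
          ≤ θ * N + ∫⁻ _, (θ * M + L) ∂convPow μ N := by
            rw [Finset.sum_range_add, hshift]
            exact add_le_add hle (lintegral_mono fun g => ih M (by lia) (g • x))
        _ = θ * (N + M : ℕ) + L := by
            rw [lintegral_const, measure_univ, mul_one, Nat.cast_add, mul_add, add_assoc]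

lemma IsAEInvariant.smul_mem_of_mem_measSupp {X : Type*} [SMul SL2 X] {μ : Measure SL2} {M : Set X}
    (hM : IsAEInvariant μ M) (hclosed : ∀ x ∈ M, IsClosed {g : SL2 | g • x ∈ M}) {g : SL2}
    (hg : g ∈ measSupp μ) {x : X} (hx : x ∈ M) : g • x ∈ M :=
  measSupp_subset_of_ae_mem (hclosed x hx) (hM x hx) hg

lemma isClosed_smul_mem {M : Set PX} (hM : M.Finite) (x : PX) : IsClosed {g : SL2 | g • x ∈ M} := by
  have hunion : {g : SL2 | g • x ∈ M} = ⋃ y ∈ M, {g : SL2 | g • x = y} := by ext; simp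
  exact hunion ▸ hM.isClosed_biUnion fun y _ => isClosed_smul_eq x y

lemma exists_sum_projDist_smul_le_lt {ν : ℕ → Measure SL2} [∀ n, IsFiniteMeasure (ν n)] {N : ℕ}
    {x y : PX} {c : ℝ≥0∞} (hc : ∑ n ∈ Finset.range N, ν n {h | h • x = y} < c) :
    ∃ r : ℝ, 0 < r ∧ r ≤ 1 ∧
      ∑ n ∈ Finset.range N, ν n {h | projDist (h • x) y ≤ r * (2 + opNorm h ^ 2)} < c := by
  set E : ℕ → Set SL2 := fun k => {h | projDist (h • x) y ≤ 1 / (k + 1) * (2 + opNorm h ^ 2)}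
  have hclosed (k : ℕ) : IsClosed (E k) := isClosed_le (continuous_projDist_smul x y)
    (continuous_const.mul (continuous_const.add (continuous_opNorm.pow 2)))
  have hanti : Antitone E := fun i j hij h (hh : projDist (h • x) y ≤ _) =>
    hh.trans (mul_le_mul_of_nonneg_right (Nat.one_div_le_one_div hij) (by positivity))
  have hinter : ⋂ k, E k = {h | h • x = y} := by
    ext h
    constructor
    · intro hh
      have hlim_zero : Tendsto (fun k : ℕ => 1 / ((k : ℝ) + 1) * (2 + opNorm h ^ 2)) atTop
          (nhds 0) := by
        simpa only [zero_mul] using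
          (tendsto_one_div_add_atTop_nhds_zero_nat (𝕜 := ℝ)).mul_const (2 + opNorm h ^ 2)
      exact projDist_eq_zero.1 ((ge_of_tendsto' hlim_zero (Set.mem_iInter.1 hh)).antisymm
        (projDist_nonneg _ _))
    · exact fun hh => Set.mem_iInter.2 fun k => (projDist_eq_zero.2 hh).trans_le (by positivity)
  have hlim : Tendsto (fun k => ∑ n ∈ Finset.range N, ν n (E k)) atTop
      (nhds (∑ n ∈ Finset.range N, ν n {h | h • x = y})) := by
    refine tendsto_finsetSum _ fun n _ => hinter ▸ ?_
    exact tendsto_measure_iInter_atTop (fun k => (hclosed k).measurableSet.nullMeasurableSet) hanti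
      ⟨0, measure_ne_top _ _⟩
  obtain ⟨k, hk⟩ := (hlim.eventually (gt_mem_nhds hc)).exists
  exact ⟨1 / (k + 1), by positivity, Nat.one_div_le_one_div k.zero_le |>.trans (by simp), hk⟩

lemma projDist_smul_le_of_projDist_le {g : SL2} {x x' y y' : PX} {r : ℝ} (hx : projDist x' x ≤ r)
    (hy : projDist y' y ≤ r) (hxy : projDist (g • x') y' ≤ r) :
    projDist (g • x) y ≤ r * (2 + opNorm g ^ 2) :=
  calc projDist (g • x) y
      ≤ projDist (g • x) (g • x') + (projDist (g • x') y' + projDist y' y) :=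
        (projDist_triangle _ _ _).trans (add_le_add_right (projDist_triangle _ _ _) _)
    _ ≤ opNorm g ^ 2 * r + (r + r) := by
        refine add_le_add ((projDist_smul_smul_le g x x').trans ?_) (add_le_add hxy hy)
        exact mul_le_mul_of_nonneg_left (projDist_comm x x' ▸ hx) (by positivity)
    _ = r * (2 + opNorm g ^ 2) := by ring

lemma ZariskiDense.not_isAEInvariant_of_isCompact {μ : Measure SL2} (hμ : ZariskiDense μ)
    {M : Set SL2} (hM : IsCompact M) (hne : M.Nonempty) : ¬ IsAEInvariant μ M := by
  intro hinv
  obtain ⟨K, hK, hsub⟩ := exists_isCompact_closure_subset hM hne (s := measSupp μ) fun g hg x hx =>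
    hinv.smul_mem_of_mem_measSupp
      (fun x _ => hM.isClosed.preimage (continuous_id.mul continuous_const)) hg hx
  obtain ⟨R, hR⟩ := hK.bddAbove_image continuous_opNorm.continuousOn
  exact hμ (isSolvable_of_opNorm_le fun g hg => hR (Set.mem_image_of_mem _ (hsub hg)))

lemma HasExpMoment.exists_integrable_exp {μ : Measure SL2} (hμ : HasExpMoment μ) :
    ∃ ε > 0, Integrable (fun g => Real.exp (ε * kappa g)) μ := by
  obtain ⟨ε, hε, hlt⟩ := hμ
  refine ⟨ε, hε, ⟨?_, ?_⟩⟩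
  · exact (Real.continuous_exp.comp (continuous_const.mul continuous_kappa)).aestronglyMeasurable
  · rw [hasFiniteIntegral_iff_ofReal (ae_of_all _ fun g => (Real.exp_pos _).le)]
    simpa only [mul_comm ε, Real.exp_mul, exp_kappa] using hlt

variable {μ : Measure SL2} [IsProbabilityMeasure μ]

lemma ZariskiDense.exists_sum_convPow_smul_eq_lt (hμ : ZariskiDense μ) (x y : PX) :
    ∃ N : ℕ, 0 < N ∧ ∑ n ∈ Finset.range N, convPow μ n {h | h • x = y} < 2 / 5 * N := by
  by_contra! hfreq
  have hle (N : ℕ) : (2 / 5 : ℝ≥0∞) ≤ visitFrequency μ y N x := by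
    rw [visitFrequency, mul_comm, ← div_eq_mul_inv, ENNReal.le_div_iff_mul_le (by simp) (by simp)]
    exact hfreq (N + 1) N.succ_pos
  obtain ⟨M, hfin, hne, hcard, hM⟩ := exists_finite_isAEInvariant
    (fun z => (isClosed_smul_eq z y).measurableSet) (by simp) hle
  have hcard' : M.ncard ≤ 2 := by
    have : ((2 / 5 : ℝ≥0∞))⁻¹ < (3 : ℕ) := by
      rw [ENNReal.inv_div (by simp) (by simp)]
      exact ENNReal.div_lt_of_lt_mul (by norm_num)
    exact Nat.lt_succ_iff.1 (Nat.cast_lt.1 (hcard.trans_lt this))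
  exact hμ (isSolvable_closure_of_ncard_le_two hfin hne hcard' fun g hg z hz =>
    hM.smul_mem_of_mem_measSupp (fun z _ => isClosed_smul_mem hfin z) hg hz)

lemma ZariskiDense.exists_forall_sum_convPow_projDist_le (hμ : ZariskiDense μ) :
    ∃ (L : ℕ) (r : ℝ), 0 < r ∧ r ≤ 1 ∧ ∀ x y : PX, ∃ N, 0 < N ∧ N ≤ L ∧
      ∑ n ∈ Finset.range N, convPow μ n {h | projDist (h • x) y ≤ r} ≤ 2 / 5 * N := by
  suffices ∃ (L : ℕ) (r : ℝ), 0 < r ∧ r ≤ 1 ∧ ∀ q ∈ (Set.univ : Set (PX × PX)), ∃ N, 0 < N ∧ N ≤ L ∧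
      ∑ n ∈ Finset.range N, convPow μ n {h | projDist (h • q.1) q.2 ≤ r} ≤ 2 / 5 * N by
    obtain ⟨L, r, hr, hr1, h⟩ := this
    exact ⟨L, r, hr, hr1, fun x y => h (x, y) trivial⟩
  refine isCompact_univ.induction_on ⟨0, 1, one_pos, le_rfl, by simp⟩
    (fun S T hST ⟨L, r, hr, hr1, h⟩ => ⟨L, r, hr, hr1, fun q hq => h q (hST hq)⟩) ?_ ?_
  · rintro S T ⟨L, r, hr, hr1, h⟩ ⟨L', r', hr', -, h'⟩
    refine ⟨max L L', min r r', lt_min hr hr', min_le_of_left_le hr1, ?_⟩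
    rintro q (hq | hq)
    · obtain ⟨N, hN, hNL, hle⟩ := h q hq
      refine ⟨N, hN, hNL.trans (le_max_left _ _), le_trans ?_ hle⟩
      exact Finset.sum_le_sum fun n _ => measure_mono fun h hh => le_trans hh (min_le_left r r')
    · obtain ⟨N, hN, hNL, hle⟩ := h' q hq
      refine ⟨N, hN, hNL.trans (le_max_right _ _), le_trans ?_ hle⟩
      exact Finset.sum_le_sum fun n _ => measure_mono fun h hh => le_trans hh (min_le_right r r')
  · rintro ⟨x, y⟩ -
    obtain ⟨N, hN, hlt⟩ := hμ.exists_sum_convPow_smul_eq_lt x y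
    obtain ⟨r, hr, hr1, hle⟩ := exists_sum_projDist_smul_le_lt hlt
    have hnhds (z : PX) : {z' | projDist z' z < r} ∈ nhds z :=
      (continuous_projDist_left z).continuousAt.eventually_lt continuousAt_const
        (projDist_eq_zero.2 rfl ▸ hr)
    refine ⟨_, mem_nhdsWithin_of_mem_nhds (prod_mem_nhds (hnhds x) (hnhds y)), N, r, hr, hr1,
      fun q hq => ⟨N, hN, le_rfl, le_trans ?_ hle.le⟩⟩
    exact Finset.sum_le_sum fun n _ => measure_mono fun h hh =>
      projDist_smul_le_of_projDist_le hq.1.le hq.2.le hh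

lemma ZariskiDense.exists_isMostlyMaximal (hμ : ZariskiDense μ) :
    ∃ (N : ℕ) (a : ℝ), 0 < N ∧ 0 ≤ a ∧
      IsLengthCocycle.IsMostlyMaximal μ kappaSeminorm cocycle N (9 / 20) a := by
  obtain ⟨L, r, hr, hr1, hL⟩ := hμ.exists_forall_sum_convPow_projDist_le
  have hmeas (x y : PX) : MeasurableSet {h : SL2 | h • x ∈ {z | projDist z y ≤ r}} :=
    (isClosed_le (continuous_projDist_smul x y) continuous_const).measurableSet
  have hLpos : 0 < L := by
    obtain ⟨x⟩ : Nonempty PX := inferInstance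
    obtain ⟨N, hN, hNL, -⟩ := hL x x
    exact hN.trans_le hNL
  refine ⟨20 * L, -Real.log r, by positivity, by simpa using Real.log_nonpos hr.le hr1, fun g => ?_⟩
  obtain ⟨y, hy⟩ := exists_kappa_add_log_le_cocycle g
  refine ⟨{z | projDist z y ≤ r}, fun z hz => ?_, fun x => ⟨hmeas x y, ?_⟩⟩
  · exact (sub_neg_eq_add _ _).trans_le (hy z r hr (not_le.1 hz).le)
  · have hle := sum_convPow_smul_mem_le (hmeas · y) (hL · y) (20 * L) x
    have hbound : (2 / 5 : ℝ≥0∞) * (20 * L : ℕ) + L = ENNReal.ofReal (9 / 20 * (20 * L : ℕ)) := by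
      rw [show (9 / 20 * (20 * L : ℕ) : ℝ) = 2 / 5 * (20 * L : ℕ) + L by push_cast; ring,
        ENNReal.ofReal_add (by positivity) (by positivity), ENNReal.ofReal_mul (by positivity),
        ENNReal.ofReal_div_of_pos (by norm_num), ENNReal.ofReal_natCast, ENNReal.ofReal_natCast,
        ENNReal.ofReal_ofNat, ENNReal.ofReal_ofNat]
    simp only [measureReal_def]
    rw [← ENNReal.toReal_sum fun n _ => measure_ne_top _ _]
    exact ENNReal.toReal_le_of_le_ofReal (by positivity) (hle.trans_eq hbound)

lemma ZariskiDense.exists_le_integral_kappa (hμ : ZariskiDense μ)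
    (hκ : ∀ n, Integrable kappa (convPow μ n)) (R : ℝ) : ∃ n, R ≤ ∫ g, kappa g ∂convPow μ n := by
  by_contra! hlt
  obtain ⟨M, hM, hne, hinv⟩ := exists_isCompact_isAEInvariant (μ := μ) (ℓ := kappaSeminorm)
    continuous_kappa isCompact_kappa_le (R := ENNReal.ofReal R) ENNReal.ofReal_ne_top fun n => by
      have hnonneg : 0 ≤ᵐ[convPow μ n] kappa := ae_of_all _ (apply_nonneg kappaSeminorm)
      exact (ofReal_integral_eq_lintegral_ofReal (hκ n) hnonneg).symm.trans_le
        (ENNReal.ofReal_le_ofReal (hlt n).le)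
  exact hμ.not_isAEInvariant_of_isCompact hM hne hinv

lemma exists_tsum_kappa_window_le (hmom : HasExpMoment μ) (hzd : ZariskiDense μ) :
    ∃ K : ℝ≥0∞, K < ⊤ ∧
      ∀ t : ℝ, ∑' n, convPow μ n {g | kappa g - t ∈ Set.Icc 0 1} ≤ K := by
  have hκ : Measurable kappaSeminorm := continuous_kappa.measurable
  obtain ⟨ε, hε, hexp⟩ := hmom.exists_integrable_exp
  have hint (n : ℕ) : Integrable kappaSeminorm (convPow μ n) :=
    integrable_of_integrable_exp hκ (apply_nonneg kappaSeminorm) hε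
      (integrable_exp_length_convPow hκ hε.le hexp n)
  obtain ⟨N, a, hN, ha, hmax⟩ := hzd.exists_isMostlyMaximal
  obtain ⟨M, hM, hdrift⟩ := isLengthCocycle_cocycle.exists_one_le_integral hint hN (by norm_num) ha
    hmax (hzd.exists_le_integral_kappa hint)
  obtain ⟨K, hK, hbound⟩ := isLengthCocycle_cocycle.exists_tsum_le_one_le hκ hε hexp hM hdrift
  exact ⟨K, hK, isLengthCocycle_cocycle.tsum_length_window_le hκ exists_cocycle_eq_kappa hbound⟩

end RandomWalk

theorem renewal_cartan_uniform_bound_general (μ : Measure SL2) [IsProbabilityMeasure μ]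
    (hmom : HasExpMoment μ) (hzd : ZariskiDense μ) :
    ∃ C > (0 : ℝ), ∀ s t : ℝ,
      (∑' n : ℕ, μpi μ n {g | kappa (word g) - t ∈ Set.Icc 0 s}) ≤
        ENNReal.ofReal (C * max 1 s) := by
  obtain ⟨K, hK, hwindow⟩ := exists_tsum_kappa_window_le hmom hzd
  refine ⟨2 * (K.toReal + 1), by positivity, fun s t => ?_⟩
  have hmeas : MeasurableSet {g | kappa g - t ∈ Set.Icc 0 s} :=
    measurableSet_Icc.preimage (continuous_kappa.measurable.sub_const t)
  have hfloor : (⌊s⌋₊ + 1 : ℝ) ≤ 2 * max 1 s := by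
    have hone : (⌊s⌋₊ : ℝ) ≤ max 1 s := by
      rcases le_total 0 s with hs | hs
      · exact (Nat.floor_le hs).trans (le_max_right _ _)
      · simp [Nat.floor_of_nonpos hs]
    linarith [le_max_left 1 s]
  calc ∑' n, μpi μ n {g | kappa (word g) - t ∈ Set.Icc 0 s}
      = ∑' n, convPow μ n {g | kappa g - t ∈ Set.Icc 0 s} :=
        tsum_congr fun n => pi_prod_ofFn_apply μ n hmeas
    _ ≤ (⌊s⌋₊ + 1 : ℕ) * K := tsum_measure_Icc_le _ _ hwindow s t
    _ = ENNReal.ofReal ((⌊s⌋₊ + 1) * K.toReal) := by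
        rw [ENNReal.ofReal_mul (by positivity), ENNReal.ofReal_toReal hK.ne]
        norm_cast
    _ ≤ ENNReal.ofReal (2 * (K.toReal + 1) * max 1 s) := by
        refine ENNReal.ofReal_le_ofReal ?_
        nlinarith [mul_le_mul_of_nonneg_right hfloor K.toReal_nonneg, le_max_left 1 s]

lemma max_one_le_max_one_sq (s : ℝ) : max 1 s ≤ max 1 (s ^ 2) :=
  max_le (le_max_left _ _) <| le_max_iff.2 <|
    (le_total s 1).imp id fun hs => le_self_pow₀ hs two_ne_zero

theorem renewal_cartan_uniform_bound
    (μ : Measure SL2) [IsProbabilityMeasure μ]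
    (hmom : HasExpMoment μ) (hzd : ZariskiDense μ) :
    ∃ C > (0 : ℝ), ∀ s t : ℝ,
      (∑' n : ℕ, μpi μ n {g | kappa (word g) - t ∈ Set.Icc 0 s}) ≤
        ENNReal.ofReal (C * max 1 (s ^ 2)) := by
  obtain ⟨C, hC, hbound⟩ := renewal_cartan_uniform_bound_general μ hmom hzd
  exact ⟨C, hC, fun s t => (hbound s t).trans <| ENNReal.ofReal_le_ofReal <|
    mul_le_mul_of_nonneg_left (max_one_le_max_one_sq s) hC.le⟩

end
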